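/- Let K be an algebraically closed field, let n >= 1, and let z in FPF_n(I_n). Then I^ss_z = I(X^ss_z); in particular, I^ss_z is a prime ideal of R_n. -/

import Mathlib

namespace Paper

/-!
We model a permutation of the positive integers `{1, 2, 3, ...}` as an `Equiv.Perm ℕ`
that fixes `0`; all notions below refer only to positive inputs.
-/

/-- The rank `r_w(i,j) = #{a ∈ [i] : w(a) ∈ [j]}` of the `i × j` partial
permutation matrix of `w`, where `[k] = {1, ..., k}`. -/
def rnk (w : Equiv.Perm ℕ) (i j : ℕ) : ℕ :=
  ((Finset.Icc 1 i).filter fun a => w a ∈ Finset.Icc 1 j).card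

/-- Right descent set `Des_R(w) = {i ≥ 1 : w(i) > w(i+1)}`. -/
def DesR (w : Equiv.Perm ℕ) : Set ℕ := {i | 1 ≤ i ∧ w (i + 1) < w i}

/-- Left descent set `Des_L(w) = Des_R(w⁻¹)`. -/
def DesL (w : Equiv.Perm ℕ) : Set ℕ := DesR w⁻¹

/-- `S_∞`: permutations of the positive integers fixing all but finitely many points. -/
def SInfty : Set (Equiv.Perm ℕ) :=
  {w | w 0 = 0 ∧ Set.Finite {i : ℕ | w i ≠ i}}

/-- `S^{m,n}_∞ = {w ∈ S_∞ : Des_R(w) ⊆ [m], Des_L(w) ⊆ [n]}`. -/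
def SmnInfty (m n : ℕ) : Set (Equiv.Perm ℕ) :=
  {w | w ∈ SInfty ∧ DesR w ⊆ Set.Icc 1 m ∧ DesL w ⊆ Set.Icc 1 n}

/-- The Rothe diagram `D(w) = {(i,j) : 0 < j < w(i), 0 < i < w⁻¹(j)}`. -/
def Rothe (w : Equiv.Perm ℕ) : Set (ℕ × ℕ) :=
  {p | 0 < p.2 ∧ p.2 < w p.1 ∧ 0 < p.1 ∧ p.1 < w⁻¹ p.2}

/-- The function `1_FPF`, sending `i ↦ i - (-1)^i` on positive integers (it fixes `0`). -/
def oneFPF : ℕ → ℕ := fun i => if i % 2 = 1 then i + 1 else i - 1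

/-- `I^FPF_∞`: fixed-point-free involutions of the positive integers agreeing with
`1_FPF` at all sufficiently large inputs. -/
def IFPFInfty : Set (Equiv.Perm ℕ) :=
  {z | z 0 = 0 ∧ (∀ i, 1 ≤ i → z i ≠ i) ∧ z * z = 1 ∧ ∃ N, ∀ i, N ≤ i → z i = oneFPF i}

/-- The skew-symmetric Rothe diagram `D^ss(z) = {(i,j) : 0 < j < z(i), j < i < z(j)}`. -/
def Dss (z : Equiv.Perm ℕ) : Set (ℕ × ℕ) :=
  {p | 0 < p.2 ∧ p.2 < z p.1 ∧ p.2 < p.1 ∧ p.1 < z p.2}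

/-- `FPF_n(I_n) = {z ∈ I^FPF_∞ : D^ss(z) ⊆ [n] × [n]}`. -/
def FPFIn (n : ℕ) : Set (Equiv.Perm ℕ) :=
  {z | z ∈ IFPFInfty ∧ Dss z ⊆ Set.Icc 1 n ×ˢ Set.Icc 1 n}

/-- `ℓ_fpf(z) = |D^ss(z)|`. -/
noncomputable def ellFpf (z : Equiv.Perm ℕ) : ℕ := (Dss z).ncard

/-- Bruhat order on `I^FPF_∞`: reflexive-transitive closure of `z < (i,j) z (i,j)`
whenever `i < j` and `ℓ_fpf` goes up by exactly one. -/
def fpfBruhatLe (z y : Equiv.Perm ℕ) : Prop :=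
  Relation.ReflTransGen
    (fun a b => ∃ i j : ℕ, 1 ≤ i ∧ i < j ∧
      b = Equiv.swap i j * a * Equiv.swap i j ∧ ellFpf b = ellFpf a + 1) z y

/-- `i` is a visible descent of `z` if `i ≥ 1` and `z(i+1) < min(i, z(i))`. -/
def visibleDescent (z : Equiv.Perm ℕ) (i : ℕ) : Prop :=
  1 ≤ i ∧ z (i + 1) < min i (z i)

/-- `Ψ(z, p) = {(p,r) z (p,r) : r > p, ℓ_fpf((p,r) z (p,r)) = ℓ_fpf(z) + 1}`. -/
def PsiSet (z : Equiv.Perm ℕ) (p : ℕ) : Set (Equiv.Perm ℕ) :=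
  {y | ∃ r : ℕ, p < r ∧ y = Equiv.swap p r * z * Equiv.swap p r ∧ ellFpf y = ellFpf z + 1}

/-- The dominant component `dom(z) = {(i,j) : i, j ≥ 1, r_z(i,j) = 0}`. -/
def domSet (z : Equiv.Perm ℕ) : Set (ℕ × ℕ) :=
  {p | 1 ≤ p.1 ∧ 1 ≤ p.2 ∧ rnk z p.1 p.2 = 0}

/-- `(p, q)` is an outer corner of `dom(z)`. -/
def IsOuterCorner (z : Equiv.Perm ℕ) (p q : ℕ) : Prop :=
  1 ≤ p ∧ 1 ≤ q ∧ (p, q) ∉ domSet z ∧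
    (p = 1 ∨ (p - 1, q) ∈ domSet z) ∧ (q = 1 ∨ (p, q - 1) ∈ domSet z)

/-- `I_n`: involutions in `S_∞` fixing every `i > n`. -/
def InvolIn (n : ℕ) : Set (Equiv.Perm ℕ) :=
  {w | w 0 = 0 ∧ w * w = 1 ∧ ∀ i, n < i → w i = i}

/-- The fixed points of `z` lying in `[n]`. -/
def fixedPtsIn (n : ℕ) (z : Equiv.Perm ℕ) : Finset ℕ :=
  (Finset.Icc 1 n).filter fun i => z i = i

/-- The function swapping `m + 2t - 1` and `m + 2t` for every `t ≥ 1`, fixing all other points. -/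
def tailSwapFun (m : ℕ) : ℕ → ℕ := fun i =>
  if i ≤ m then i else if (i - m) % 2 = 1 then i + 1 else i - 1

theorem tailSwapFun_involutive (m : ℕ) : Function.Involutive (tailSwapFun m) := by
  intro i
  unfold tailSwapFun
  split_ifs <;> omega

/-- The involution swapping `m + 2t - 1` and `m + 2t` for every `t ≥ 1`. -/
def tailSwap (m : ℕ) : Equiv.Perm ℕ :=
  Function.Involutive.toPerm _ (tailSwapFun_involutive m)

/-- The fixed-point-free standardization `FPF_n(z) = z ⋅ (i_1,n+1)⋯(i_k,n+k) ⋅ c`,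
where `i_1 < ⋯ < i_k` are the fixed points of `z` in `[n]` and `c` swaps
`n+k+2t-1, n+k+2t` for all `t ≥ 1`. -/
noncomputable def fpfStd (n : ℕ) (z : Equiv.Perm ℕ) : Equiv.Perm ℕ :=
  z *
    (List.ofFn fun t : Fin (fixedPtsIn n z).card =>
      Equiv.swap ((fixedPtsIn n z).orderEmbOfFin rfl t) (n + (t : ℕ) + 1)).prod *
    tailSwap (n + (fixedPtsIn n z).card)

/-- `Mat^ss_n(K)`: skew-symmetric `n × n` matrices (transpose is the negative, zero diagonal).
Row/column index `a : Fin n` corresponds to the (1-indexed) row/column `a + 1`. -/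
def MatSS (K : Type*) [CommRing K] (n : ℕ) : Set (Matrix (Fin n) (Fin n) K) :=
  {A | A.transpose = -A ∧ ∀ i, A i i = 0}

/-- The skew-symmetric matrix Schubert variety
`X^ss_z = {A ∈ Mat^ss_n : rank A_{[i][j]} ≤ r_z(i,j) for all i, j ∈ [n]}`. -/
noncomputable def Xss (K : Type*) [Field K] (n : ℕ) (z : Equiv.Perm ℕ) :
    Set (Matrix (Fin n) (Fin n) K) :=
  {A | A ∈ MatSS K n ∧ ∀ (i j : ℕ) (hi : i ≤ n) (hj : j ≤ n), 1 ≤ i → 1 ≤ j →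
    (A.submatrix (Fin.castLE hi) (Fin.castLE hj)).rank ≤ rnk z i j}

/-- `#{(i,j) : i > j, j < z(i), i < z(j)}` for a permutation of `Fin N`
(the `0`-indexed version of `ℓ_fpf`). -/
def ellFpfFin {N : ℕ} (z : Equiv.Perm (Fin N)) : ℕ :=
  (Finset.univ.filter fun p : Fin N × Fin N => p.2 < p.1 ∧ p.2 < z p.1 ∧ p.1 < z p.2).card

/-- The Pfaffian of an `N × N` matrix:
`pf(A) = ∑_{z fpf involution of [N]} (-1)^{ℓ_fpf(z)} ∏_{z(i) < i} A_{z(i), i}`.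
(The sum is empty, hence `0`, when `N` is odd.) -/
noncomputable def Pfaffian {R : Type*} [CommRing R] {N : ℕ} (A : Matrix (Fin N) (Fin N) R) : R :=
  ∑ z ∈ Finset.univ.filter (fun z : Equiv.Perm (Fin N) => (∀ i, z i ≠ i) ∧ ∀ i, z (z i) = i),
    (-1 : R) ^ ellFpfFin z * ∏ i ∈ Finset.univ.filter (fun i : Fin N => z i < i), A (z i) i

/-- Index set for the variables `u_{ij}`, `n ≥ i > j ≥ 1`, of the coordinate ring
`R_n = K[Mat^ss_n]`; the variable `⟨(a, b), _⟩` is `u_{a+1, b+1}`. -/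
abbrev SSVar (n : ℕ) : Type := {p : Fin n × Fin n // p.2 < p.1}

/-- The generic skew-symmetric matrix `U^ss` over `R_n`. -/
noncomputable def Uss (K : Type*) [CommRing K] (n : ℕ) :
    Matrix (Fin n) (Fin n) (MvPolynomial (SSVar n) K) :=
  Matrix.of fun i j =>
    if h : j < i then MvPolynomial.X ⟨(i, j), h⟩
    else if h' : i < j then -MvPolynomial.X ⟨(j, i), h'⟩
    else 0

/-- The ideal of polynomials vanishing on a set `X`, where a point `A` is evaluated
via `ev A : σ → K`. -/
noncomputable def vanishingIdeal {K : Type*} [CommRing K] {σ M : Type*}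
    (X : Set M) (ev : M → σ → K) : Ideal (MvPolynomial σ K) where
  carrier := {f | ∀ A ∈ X, MvPolynomial.eval (ev A) f = 0}
  zero_mem' := by simp
  add_mem' := by
    intro f g hf hg
    simp only [Set.mem_setOf_eq] at *
    intro A hA
    rw [map_add, hf A hA, hg A hA, add_zero]
  smul_mem' := by
    intro c f hf
    simp only [Set.mem_setOf_eq] at *
    intro A hA
    rw [smul_eq_mul, map_mul, hf A hA, mul_zero]

/-- `I(X^ss_z) ⊆ R_n`, where `u_{ij}` is evaluated at `A` as `A_{ij}`. -/
noncomputable def IXss (K : Type*) [Field K] (n : ℕ) (z : Equiv.Perm ℕ) :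
    Ideal (MvPolynomial (SSVar n) K) :=
  vanishingIdeal (Xss K n z) fun A v => A v.1.1 v.1.2

/-- `pf(U^ss_{RR})` for a finite row/column set `R` (listed in increasing order). -/
noncomputable def pfUss (K : Type*) [CommRing K] {n : ℕ} (R : Finset (Fin n)) :
    MvPolynomial (SSVar n) K :=
  Pfaffian ((Uss K n).submatrix (fun s => R.orderEmbOfFin rfl s) fun t => R.orderEmbOfFin rfl t)

/-- The ideal `I^ss_z`, generated by the Pfaffians `pf(U^ss_{RR})` over all nonempty
even-size `R ⊆ [n]` such that `R ⊆ [i]` and `|R ∩ [j]| > r_z(i,j)` for some `i ≥ j`. -/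
noncomputable def IssIdeal (K : Type*) [Field K] (n : ℕ) (z : Equiv.Perm ℕ) :
    Ideal (MvPolynomial (SSVar n) K) :=
  Ideal.span {f : MvPolynomial (SSVar n) K | ∃ R : Finset (Fin n),
    R.Nonempty ∧ Even R.card ∧
    (∃ i j : ℕ, 1 ≤ j ∧ j ≤ i ∧ i ≤ n ∧ (∀ a ∈ R, (a : ℕ) + 1 ≤ i) ∧
      rnk z i j < (R.filter fun a : Fin n => (a : ℕ) + 1 ≤ j).card) ∧
    f = pfUss K R}

/-- The square-free monomial `u^ss_{AB}`: zero if `A ⊙ B` meets the diagonal, and otherwise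
the product of the variables `u_{ij}` over the pairs `i > j` with `(i,j)` or `(j,i)` in
`A ⊙ B = {(a_0, b_r), (a_1, b_{r-1}), ..., (a_r, b_0)}`. -/
noncomputable def ussMon (K : Type*) [CommRing K] {n : ℕ} (A B : Finset (Fin n)) :
    MvPolynomial (SSVar n) K :=
  if h : A.card = B.card then
    if ∃ t : Fin A.card, (A.orderEmbOfFin rfl t : Fin n) = B.orderEmbOfFin h.symm t.rev then 0
    else
      ∏ v ∈ Finset.univ.filter (fun v : SSVar n => ∃ t : Fin A.card,
          (A.orderEmbOfFin rfl t = v.1.1 ∧ B.orderEmbOfFin h.symm t.rev = v.1.2) ∨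
          (A.orderEmbOfFin rfl t = v.1.2 ∧ B.orderEmbOfFin h.symm t.rev = v.1.1)),
        MvPolynomial.X v
  else 0

/-- The monomial ideal `J^ss_r` of a symmetric rank table `r`, generated by the monomials
`u^ss_{AB}` with `A ⊆ [i]`, `B ⊆ [j]`, `|A| = |B| = r(i,j) + 1` for some `n ≥ i ≥ j ≥ 1`. -/
noncomputable def JssIdealOfTable (K : Type*) [CommRing K] (n : ℕ) (r : ℕ → ℕ → ℕ) :
    Ideal (MvPolynomial (SSVar n) K) :=
  Ideal.span {g : MvPolynomial (SSVar n) K | ∃ (i j : ℕ) (A B : Finset (Fin n)),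
    1 ≤ j ∧ j ≤ i ∧ i ≤ n ∧
    (∀ a ∈ A, (a : ℕ) + 1 ≤ i) ∧ (∀ b ∈ B, (b : ℕ) + 1 ≤ j) ∧
    A.card = r i j + 1 ∧ B.card = r i j + 1 ∧ g = ussMon K A B}

/-- `J^ss_z = J^ss_{r_z}`. -/
noncomputable def JssIdeal (K : Type*) [CommRing K] (n : ℕ) (z : Equiv.Perm ℕ) :
    Ideal (MvPolynomial (SSVar n) K) :=
  JssIdealOfTable K n (rnk z)

/-- Total degree of a monomial (exponent vector). -/
def totalDeg {σ : Type*} (m : σ →₀ ℕ) : ℕ := m.sum fun _ e => e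

/-- The lexicographic order on the variables `u_{ij}` by the pair `(i, j)`. -/
def varLT {n : ℕ} (v w : SSVar n) : Prop :=
  v.1.1 < w.1.1 ∨ (v.1.1 = w.1.1 ∧ v.1.2 < w.1.2)

/-- The (graded) reverse lexicographic term order on monomials of `R_n`:
`m₁ < m₂` iff `deg m₁ < deg m₂`, or the degrees agree and the lexicographically largest
variable with different exponents has strictly larger exponent in `m₁`. -/
def revlexLT {n : ℕ} (m₁ m₂ : SSVar n →₀ ℕ) : Prop :=
  totalDeg m₁ < totalDeg m₂ ∨
    (totalDeg m₁ = totalDeg m₂ ∧ ∃ v, m₂ v < m₁ v ∧ ∀ w, varLT v w → m₁ w = m₂ w)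

/-- The initial ideal of `I` with respect to a strict term order `lt`: the ideal
generated by the leading monomials `init(f)` of the nonzero `f ∈ I`. -/
noncomputable def initIdeal {K : Type*} [CommRing K] {σ : Type*}
    (lt : (σ →₀ ℕ) → (σ →₀ ℕ) → Prop) (I : Ideal (MvPolynomial σ K)) :
    Ideal (MvPolynomial σ K) :=
  Ideal.span {g : MvPolynomial σ K | ∃ f ∈ I, f ≠ 0 ∧ ∃ m : σ →₀ ℕ, m ∈ f.support ∧
    (∀ m' ∈ f.support, m' ≠ m → lt m' m) ∧ g = MvPolynomial.monomial m (1 : K)}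

/-- A term order on the monomials of a polynomial ring: a linear order in which `1` is
the unique minimum and multiplication by a fixed monomial preserves order. -/
structure TermOrder (σ : Type*) where
  le : (σ →₀ ℕ) → (σ →₀ ℕ) → Prop
  trans : ∀ a b c, le a b → le b c → le a c
  antisymm : ∀ a b, le a b → le b a → a = b
  total : ∀ a b, le a b ∨ le b a
  zero_le : ∀ a, le 0 a
  add_le_add_right : ∀ a b c, le a b → le (a + c) (b + c)

/-- The initial ideal of `I` with respect to a term order `τ`. -/
noncomputable def initIdealLe {K : Type*} [CommRing K] {σ : Type*}
    (τ : TermOrder σ) (I : Ideal (MvPolynomial σ K)) : Ideal (MvPolynomial σ K) :=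
  Ideal.span {g : MvPolynomial σ K | ∃ f ∈ I, f ≠ 0 ∧ ∃ m : σ →₀ ℕ, m ∈ f.support ∧
    (∀ m' ∈ f.support, τ.le m' m) ∧ g = MvPolynomial.monomial m (1 : K)}

/-- An ideal is homogeneous (w.r.t. total degree) iff it contains all homogeneous
components of its elements. -/
def IsHomogIdeal {K : Type*} [CommSemiring K] {σ : Type*}
    (I : Ideal (MvPolynomial σ K)) : Prop :=
  ∀ f ∈ I, ∀ d : ℕ, MvPolynomial.homogeneousComponent d f ∈ I

/-- The reading order on boxes: rows top to bottom, each row right to left. -/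
def pdRel (p q : ℕ × ℕ) : Prop := p.1 < q.1 ∨ (p.1 = q.1 ∧ q.2 ≤ p.2)

instance : DecidableRel pdRel := fun p q => by unfold pdRel; infer_instance

instance : IsTrans (ℕ × ℕ) pdRel :=
  ⟨fun a b c hab hbc => by unfold pdRel at *; omega⟩

instance : IsAntisymm (ℕ × ℕ) pdRel :=
  ⟨fun a b hab hba => by
    unfold pdRel at hab hba
    exact Prod.ext_iff.mpr ⟨by omega, by omega⟩⟩

instance : IsTotal (ℕ × ℕ) pdRel :=
  ⟨fun a b => by unfold pdRel; omega⟩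

/-- The pipe dream reading word of a finite set `D` of boxes: the letters `i + j - 1`
over `(i, j) ∈ D`, in the order making `(i, -j)` increase lexicographically. -/
def pdWord (D : Finset (ℕ × ℕ)) : List ℕ :=
  (D.sort pdRel).map fun p => p.1 + p.2 - 1

/-- The product `s_{i_1} s_{i_2} ⋯ s_{i_l}` of simple transpositions. -/
def wordProd (l : List ℕ) : Equiv.Perm ℕ :=
  (l.map fun i => Equiv.swap i (i + 1)).prod

/-- `l` is a reduced word for `w`: a minimal-length word of positive letters whose
product of simple transpositions is `w`. -/
def IsReducedWordOf (w : Equiv.Perm ℕ) (l : List ℕ) : Prop :=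
  (∀ a ∈ l, 1 ≤ a) ∧ wordProd l = w ∧
    ∀ l' : List ℕ, (∀ a ∈ l', 1 ≤ a) → wordProd l' = w → l.length ≤ l'.length

/-- The set `RP(w)` of reduced pipe dreams for `w`. -/
def RP (w : Equiv.Perm ℕ) : Set (Finset (ℕ × ℕ)) :=
  {D | (∀ p ∈ D, 1 ≤ p.1 ∧ 1 ≤ p.2) ∧ IsReducedWordOf w (pdWord D)}

/-- `I^FPF_m`: involutions in `S_∞` that are fixed-point-free on `[m]` and fix
all `i > m`. -/
def IFPFm (m : ℕ) : Set (Equiv.Perm ℕ) :=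
  {y | y 0 = 0 ∧ y * y = 1 ∧ (∀ i, 1 ≤ i → i ≤ m → y i ≠ i) ∧ ∀ i, m < i → y i = i}

/-- `z = FPF_m(y)`: `z` agrees with `y` on `[m]` and swaps `m + 2k - 1, m + 2k`
for all `k ≥ 1`. -/
def IsFPFStdOf (m : ℕ) (y z : Equiv.Perm ℕ) : Prop :=
  (∀ i, i ≤ m → z i = y i) ∧
    ∀ k : ℕ, z (m + 2 * k + 1) = m + 2 * k + 2 ∧ z (m + 2 * k + 2) = m + 2 * k + 1

/-- The set `FP(z)` of fpf-involution pipe dreams for `z ∈ I^FPF_∞`. -/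
def FP (z : Equiv.Perm ℕ) : Set (Finset (ℕ × ℕ)) :=
  {E | ∃ (m : ℕ) (y : Equiv.Perm ℕ) (D : Finset (ℕ × ℕ)), Even m ∧ y ∈ IFPFm m ∧
    IsFPFStdOf m y z ∧ D ∈ RP y ∧ D.image Prod.swap = D ∧
    E = D.filter fun p => p.2 < p.1}

/-- The minor `det(U_{AB})` of the generic `m × n` matrix `U`, with rows `A` and
columns `B` listed in increasing order. -/
noncomputable def genMinor (K : Type*) [CommRing K] {m n : ℕ}
    (A : Finset (Fin m)) (B : Finset (Fin n)) (h : A.card = B.card) :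
    MvPolynomial (Fin m × Fin n) K :=
  (Matrix.of fun s t : Fin A.card =>
    (MvPolynomial.X (A.orderEmbOfFin rfl s, B.orderEmbOfFin h.symm t) :
      MvPolynomial (Fin m × Fin n) K)).det

/-- The antidiagonal monomial `u_{AB} = ∏_{(a,b) ∈ A ⊙ B} u_{ab}`. -/
noncomputable def genMon (K : Type*) [CommRing K] {m n : ℕ}
    (A : Finset (Fin m)) (B : Finset (Fin n)) (h : A.card = B.card) :
    MvPolynomial (Fin m × Fin n) K :=
  ∏ t : Fin A.card, MvPolynomial.X (A.orderEmbOfFin rfl t, B.orderEmbOfFin h.symm t.rev)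

/-- The exponent vector of the antidiagonal monomial `u_{AB}`. -/
noncomputable def antidiagExp {m n : ℕ} (A : Finset (Fin m)) (B : Finset (Fin n))
    (h : A.card = B.card) : (Fin m × Fin n) →₀ ℕ :=
  ∑ t : Fin A.card, Finsupp.single (A.orderEmbOfFin rfl t, B.orderEmbOfFin h.symm t.rev) 1

/-- The ideal `I_w`, generated by the minors `det(U_{AB})` with `A ⊆ [i]`, `B ⊆ [j]`,
`|A| = |B| = r_w(i,j) + 1` for some `(i,j) ∈ [m] × [n]`. -/
noncomputable def IwIdeal (K : Type*) [Field K] (m n : ℕ) (w : Equiv.Perm ℕ) :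
    Ideal (MvPolynomial (Fin m × Fin n) K) :=
  Ideal.span {g : MvPolynomial (Fin m × Fin n) K |
    ∃ (i j : ℕ) (A : Finset (Fin m)) (B : Finset (Fin n)) (h : A.card = B.card),
      1 ≤ i ∧ i ≤ m ∧ 1 ≤ j ∧ j ≤ n ∧ (∀ a ∈ A, (a : ℕ) + 1 ≤ i) ∧
      (∀ b ∈ B, (b : ℕ) + 1 ≤ j) ∧ A.card = rnk w i j + 1 ∧ g = genMinor K A B h}

/-- The monomial ideal `J_w`, generated by the monomials `u_{AB}` with `A ⊆ [i]`,
`B ⊆ [j]`, `|A| = |B| = r_w(i,j) + 1` for some `(i,j) ∈ [m] × [n]`. -/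
noncomputable def JwIdeal (K : Type*) [Field K] (m n : ℕ) (w : Equiv.Perm ℕ) :
    Ideal (MvPolynomial (Fin m × Fin n) K) :=
  Ideal.span {g : MvPolynomial (Fin m × Fin n) K |
    ∃ (i j : ℕ) (A : Finset (Fin m)) (B : Finset (Fin n)) (h : A.card = B.card),
      1 ≤ i ∧ i ≤ m ∧ 1 ≤ j ∧ j ≤ n ∧ (∀ a ∈ A, (a : ℕ) + 1 ≤ i) ∧
      (∀ b ∈ B, (b : ℕ) + 1 ≤ j) ∧ A.card = rnk w i j + 1 ∧ g = genMon K A B h}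

/-- The matrix Schubert variety
`X_w = {A ∈ Mat_{m×n} : rank A_{[i][j]} ≤ r_w(i,j) for all (i,j) ∈ [m] × [n]}`. -/
noncomputable def Xw (K : Type*) [Field K] (m n : ℕ) (w : Equiv.Perm ℕ) :
    Set (Matrix (Fin m) (Fin n) K) :=
  {A | ∀ (i j : ℕ) (hi : i ≤ m) (hj : j ≤ n), 1 ≤ i → 1 ≤ j →
    (A.submatrix (Fin.castLE hi) (Fin.castLE hj)).rank ≤ rnk w i j}

/-- `I(X_w)`: the ideal of polynomials vanishing on `X_w`. -/
noncomputable def IXw (K : Type*) [Field K] (m n : ℕ) (w : Equiv.Perm ℕ) :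
    Ideal (MvPolynomial (Fin m × Fin n) K) :=
  vanishingIdeal (Xw K m n w) fun A v => A v.1 v.2

/-- The variable `u_{pq}` (with `1 ≤ q < p ≤ n`) of `R_n`. -/
def ssvar {n : ℕ} (p q : ℕ) (hp : p ≤ n) (hq : 1 ≤ q) (hqp : q < p) : SSVar n :=
  ⟨(⟨p - 1, by omega⟩, ⟨q - 1, by omega⟩), Fin.mk_lt_mk.mpr (by omega)⟩

/-- Index set for the variables `u_{ij}`, `i > j ≥ 1`, over all positive integers. -/
abbrev PVar : Type := {p : ℕ × ℕ // 1 ≤ p.2 ∧ p.2 < p.1}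

/-- The generic skew-symmetric array `U^ss` over the positive integers:
`u_{xy}` if `x > y`, `-u_{yx}` if `x < y`, `0` if `x = y`. -/
noncomputable def UssP (K : Type*) [CommRing K] (x y : ℕ) : MvPolynomial PVar K :=
  if h : 1 ≤ y ∧ y < x then MvPolynomial.X ⟨(x, y), h⟩
  else if h' : 1 ≤ x ∧ x < y then -MvPolynomial.X ⟨(y, x), h'⟩
  else 0

/-- `pf(U^ss_{RR})` for a finite set `R` of positive integers. -/
noncomputable def pfUssP (K : Type*) [CommRing K] (R : Finset ℕ) : MvPolynomial PVar K :=
  Pfaffian (Matrix.of fun s t : Fin R.card =>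
    UssP K (R.orderEmbOfFin rfl s) (R.orderEmbOfFin rfl t))

/-- `g_{AB}`: the Pfaffian of the `(|B|+|A|) × (|B|+|A|)` skew-symmetric matrix whose
rows and columns are labeled by `B` (increasing) followed by `A` (increasing), with
entry `U^ss_{xy}` at a position labeled `(x, y)`, except that the entry is `0` when
both labels come from the `A`-block. -/
noncomputable def gAB (K : Type*) [CommRing K] (A B : Finset ℕ) : MvPolynomial PVar K :=
  Pfaffian ((Matrix.of fun p q : Fin B.card ⊕ Fin A.card =>
      match p, q with
      | Sum.inl s, Sum.inl t => UssP K (B.orderEmbOfFin rfl s) (B.orderEmbOfFin rfl t)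
      | Sum.inl s, Sum.inr t => UssP K (B.orderEmbOfFin rfl s) (A.orderEmbOfFin rfl t)
      | Sum.inr s, Sum.inl t => UssP K (A.orderEmbOfFin rfl s) (B.orderEmbOfFin rfl t)
      | Sum.inr _, Sum.inr _ => (0 : MvPolynomial PVar K)).submatrix
    finSumFinEquiv.symm finSumFinEquiv.symm)

/-- The exponent of the sign `⟨T, S⟩ = (-1)^{|S||T| + C(|S|,2) + ∑ of the (1-indexed)
positions in the increasing enumeration of `T` occupied by elements of `S`}`. -/
def setSgnExp (T S : Finset ℕ) : ℕ :=
  S.card * T.card + Nat.choose S.card 2 +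
    ∑ t : Fin T.card, if T.orderEmbOfFin rfl t ∈ S then (t : ℕ) + 1 else 0


section

def IsMat {N : ℕ} (z : Equiv.Perm (Fin N)) : Prop := (∀ i, z i ≠ i) ∧ ∀ i, z (z i) = i

instance {N : ℕ} (z : Equiv.Perm (Fin N)) : Decidable (IsMat z) := by
  unfold IsMat; infer_instance

theorem swap_lt_iff {N : ℕ} (k k' : Fin N) (hk : (k':ℕ) = k + 1) (x y : Fin N) :
    Equiv.swap k k' x < Equiv.swap k k' y ↔ (x < y ∧ ¬ (x = k ∧ y = k')) ∨ (x = k' ∧ y = k) := by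
  simp only [Equiv.swap_apply_def, Fin.lt_def, Fin.ext_iff]
  split_ifs <;> omega

def ellTwo {N : ℕ} (z : Equiv.Perm (Fin N)) : Finset (Fin N × Fin N) :=
  Finset.univ.filter fun p => p.1 ≠ p.2 ∧ p.2 < z p.1 ∧ p.1 < z p.2

theorem ellTwo_card {N : ℕ} (z : Equiv.Perm (Fin N)) : (ellTwo z).card = 2 * ellFpfFin z := by
  have h1 : ellTwo z = (Finset.univ.filter fun p : Fin N × Fin N => p.2 < p.1 ∧ p.2 < z p.1 ∧ p.1 < z p.2) ∪
     (Finset.univ.filter fun p : Fin N × Fin N => p.2 < p.1 ∧ p.2 < z p.1 ∧ p.1 < z p.2).map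
       (Equiv.prodComm _ _).toEmbedding := by
    ext ⟨a, b⟩
    simp only [ellTwo, Finset.mem_filter, Finset.mem_univ, true_and, Finset.mem_union,
      Finset.mem_map_equiv]
    simp only [Equiv.prodComm_symm, Equiv.prodComm_apply, Prod.swap_prod_mk]
    rw [ne_iff_lt_or_gt]
    tauto
  rw [h1, Finset.card_union_of_disjoint, Finset.card_map, ellFpfFin]
  · ring
  · rw [Finset.disjoint_left]
    rintro ⟨a, b⟩
    simp only [Finset.mem_filter, Finset.mem_univ, true_and, Finset.mem_map_equiv]
    simp only [Equiv.prodComm_symm, Equiv.prodComm_apply, Prod.swap_prod_mk]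
    rintro ⟨h, -⟩ ⟨h', -⟩
    exact absurd h (not_lt.2 h'.le)

theorem ell_swap_lt {N : ℕ} (z : Equiv.Perm (Fin N)) (hz : IsMat z) (k k' : Fin N)
    (hk : (k':ℕ) = k + 1) (hlt : z k' < z k) (hne : z k ≠ k') :
    ellFpfFin z = ellFpfFin (Equiv.swap k k' * z * Equiv.swap k k') + 1 := by
  obtain ⟨hfix, hinv⟩ := hz
  have hsl : ∀ x y, Equiv.swap k k' x < Equiv.swap k k' y ↔ (x < y ∧ ¬ (x = k ∧ y = k')) ∨ (x = k' ∧ y = k) :=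
    swap_lt_iff k k' hk
  have hkk' : k < k' := by rw [Fin.lt_def]; omega
  have hlt1 : ∀ x, k < x → x ≠ k' → k' < x := fun x h h' => by
    rw [Fin.lt_def] at *; rw [Ne, Fin.ext_iff] at h'; omega
  have hyk : z k' ≠ k := fun h => hne (by rw [← h, hinv])
  suffices h : ellTwo z = insert (k, z k') (insert (z k', k)
      ((ellTwo (Equiv.swap k k' * z * Equiv.swap k k')).map
        ((Equiv.swap k k').prodCongr (Equiv.swap k k')).toEmbedding)) by
    have h2 := congrArg Finset.card h
    rw [Finset.card_insert_of_notMem, Finset.card_insert_of_notMem, Finset.card_map,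
      ellTwo_card, ellTwo_card] at h2
    · omega
    · simp only [Finset.mem_map_equiv, ellTwo, Finset.mem_filter, Finset.mem_univ, true_and]
      simp [hsl, hinv]
      grind
    · rw [Finset.mem_insert]
      simp only [Finset.mem_map_equiv, ellTwo, Finset.mem_filter, Finset.mem_univ, true_and]
      simp [hsl, hinv]
      grind
  ext ⟨a, b⟩
  simp only [Finset.mem_insert, Finset.mem_map_equiv, ellTwo, Finset.mem_filter, Finset.mem_univ, true_and]
  simp [hsl, hinv]
  have e1 : z a = k ↔ a = z k := ⟨fun h => by rw [← h, hinv], fun h => by rw [h, hinv]⟩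
  have e2 : z a = k' ↔ a = z k' := ⟨fun h => by rw [← h, hinv], fun h => by rw [h, hinv]⟩
  have e3 : z b = k ↔ b = z k := ⟨fun h => by rw [← h, hinv], fun h => by rw [h, hinv]⟩
  have e4 : z b = k' ↔ b = z k' := ⟨fun h => by rw [← h, hinv], fun h => by rw [h, hinv]⟩
  have f1 := hfix a
  have f2 := hfix b
  have f3 := hfix k
  have f4 := hfix k'
  have f5 := hinv k
  have f6 := hinv k'
  rw [e1,e2,e3,e4]
  by_cases h1 : a = z k'
  · by_cases h2 : b = k
    · subst h1 h2; simp [hinv, hlt, hkk', hyk]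
    · subst h1; simp only [hinv]; grind
  · by_cases h2 : b = z k'
    · subst h2; simp only [hinv]; grind
    · grind

end

section

theorem IsMat.conj {N : ℕ} {z : Equiv.Perm (Fin N)} (hz : IsMat z) (s : Equiv.Perm (Fin N))
    (hs : ∀ x, s (s x) = x) : IsMat (s * z * s) := by
  refine ⟨fun i h => ?_, fun i => ?_⟩
  · simp only [Equiv.Perm.mul_apply] at h
    apply hz.1 (s i)
    rw [← hs (z (s i)), h]
  · simp [Equiv.Perm.mul_apply, hs, hz.2]

theorem ell_swap {N : ℕ} (z : Equiv.Perm (Fin N)) (hz : IsMat z) (k k' : Fin N)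
    (hk : (k':ℕ) = k + 1) (hne : z k ≠ k') :
    (-1 : ℤ) ^ ellFpfFin (Equiv.swap k k' * z * Equiv.swap k k') = - (-1) ^ ellFpfFin z := by
  have hkk : k ≠ k' := fun h => by rw [h] at hk; omega
  rcases lt_or_gt_of_ne (fun h => hkk (z.injective h).symm : z k' ≠ z k) with h | h
  · rw [ell_swap_lt z hz k k' hk h hne, pow_succ]; ring
  · have hne' : z k' ≠ k := fun h => hne (by rw [← h, hz.2])
    have h1 : z k ≠ k := hz.1 k
    have h2 : z k' ≠ k' := hz.1 k'
    have := ell_swap_lt (Equiv.swap k k' * z * Equiv.swap k k') (hz.conj _ (by simp)) k k' hk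
      (by simp [Equiv.swap_apply_of_ne_of_ne, *]) (by simp [Equiv.swap_apply_of_ne_of_ne, *])
    have e : Equiv.swap k k' * (Equiv.swap k k' * z * Equiv.swap k k') * Equiv.swap k k' = z := by
      ext x; simp
    rw [this, e, pow_succ]; ring

theorem conj_swap_self {N : ℕ} (z : Equiv.Perm (Fin N)) (hz : IsMat z) (k k' : Fin N) (h : z k = k') :
    Equiv.swap k k' * z * Equiv.swap k k' = z := by
  have h' : z k' = k := by rw [← h, hz.2]
  rw [mul_assoc, Equiv.mul_swap_eq_swap_mul, h, h', Equiv.swap_comm k' k]; ext; simp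

variable {R : Type*} [CommRing R]

def pfTerm {N : ℕ} (A : Matrix (Fin N) (Fin N) R) (z : Equiv.Perm (Fin N)) : R :=
  (-1) ^ ellFpfFin z * ∏ i ∈ Finset.univ.filter (fun i => z i < i), A (z i) i

theorem pf_eq {N : ℕ} (A : Matrix (Fin N) (Fin N) R) :
    Pfaffian A = ∑ z ∈ Finset.univ.filter (fun z : Equiv.Perm (Fin N) => IsMat z), pfTerm A z := by
  unfold Pfaffian pfTerm IsMat
  apply Finset.sum_congr _ (fun _ _ => rfl)
  ext
  rw [Finset.mem_filter]

def Alt {N : ℕ} (A : Matrix (Fin N) (Fin N) R) : Prop := (∀ i, A i i = 0) ∧ ∀ i j, A i j = - A j i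

theorem pfTerm_swap_ne {N : ℕ} (A : Matrix (Fin N) (Fin N) R) (z : Equiv.Perm (Fin N)) (hz : IsMat z)
    (k k' : Fin N) (hk : (k':ℕ) = k + 1) (hne : z k ≠ k') :
    pfTerm A (Equiv.swap k k' * z * Equiv.swap k k') =
      - pfTerm (A.submatrix (Equiv.swap k k') (Equiv.swap k k')) z := by
  unfold pfTerm
  have h1 := congrArg (Int.cast : ℤ → R) (ell_swap z hz k k' hk hne)
  push_cast at h1
  rw [h1, neg_mul]
  congr 2
  symm
  apply Finset.prod_nbij' (Equiv.swap k k') (Equiv.swap k k')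
  · intro i hi
    have hz2 := hz.2 i
    rw [Finset.mem_filter] at hi ⊢
    simp only [Finset.mem_univ, true_and, Equiv.Perm.mul_apply, Equiv.swap_apply_self,
      swap_lt_iff k k' hk] at hi ⊢
    left; refine ⟨hi, ?_⟩; rintro ⟨h1, h2⟩; apply hne; rw [← h1, hz.2, h2]
  · intro i hi
    rw [Finset.mem_filter] at hi ⊢
    simp only [Finset.mem_univ, true_and, Equiv.Perm.mul_apply] at hi ⊢
    have h2 : z (Equiv.swap k k' i) = Equiv.swap k k' (Equiv.swap k k' (z (Equiv.swap k k' i))) := by simp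
    rw [h2, swap_lt_iff k k' hk]
    left; refine ⟨hi, ?_⟩; rintro ⟨h1, h2⟩; apply hne
    subst h2
    simp at h1
    rw [Equiv.swap_apply_eq_iff] at h1
    simpa using h1
  · simp
  · simp
  · intro i hi
    simp

theorem pfTerm_swap_eq {N : ℕ} (A : Matrix (Fin N) (Fin N) R) (hA : Alt A) (z : Equiv.Perm (Fin N)) (hz : IsMat z)
    (k k' : Fin N) (hk : (k':ℕ) = k + 1) (hne : z k = k') :
    pfTerm (A.submatrix (Equiv.swap k k') (Equiv.swap k k')) z = - pfTerm A z := by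
  unfold pfTerm
  rw [← mul_neg]
  congr 1
  have hk'z : z k' = k := by rw [← hne, hz.2]
  have hmem : k' ∈ Finset.univ.filter (fun i => z i < i) := by
    rw [Finset.mem_filter, hk'z, Fin.lt_def]; simp [hk]
  rw [← Finset.mul_prod_erase _ _ hmem, ← Finset.mul_prod_erase _ _ hmem, ← neg_mul, hk'z]
  congr 1
  · simp; rw [hA.2]
  · apply Finset.prod_congr rfl
    intro i hi
    simp only [Finset.mem_erase, Finset.mem_filter, Finset.mem_univ, true_and] at hi
    have hik : i ≠ k := fun h => by
      have := hi.2; rw [h, hne, Fin.lt_def] at this; omega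
    have h1 : z i ≠ k := fun h => hi.1 (by rw [← hne, ← h, hz.2])
    have h2 : z i ≠ k' := fun h => hik (by rw [← hk'z, ← h, hz.2])
    simp [Equiv.swap_apply_of_ne_of_ne, hik, hi.1, h1, h2]

theorem pf_swap {N : ℕ} (A : Matrix (Fin N) (Fin N) R) (hA : Alt A)
    (k k' : Fin N) (hk : (k':ℕ) = k + 1) :
    Pfaffian (A.submatrix (Equiv.swap k k') (Equiv.swap k k')) = - Pfaffian A := by
  rw [pf_eq, pf_eq, ← Finset.sum_neg_distrib]
  apply Finset.sum_nbij' (fun z => Equiv.swap k k' * z * Equiv.swap k k')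
    (fun z => Equiv.swap k k' * z * Equiv.swap k k')
  · intro z hz; simp at hz ⊢; exact hz.conj _ (by simp)
  · intro z hz; simp at hz ⊢; exact hz.conj _ (by simp)
  · intro z hz; ext; simp
  · intro z hz; ext; simp
  · intro z hz
    simp only [Finset.mem_filter, Finset.mem_univ, true_and] at hz
    by_cases h : z k = k'
    · have : Equiv.swap k k' * z * Equiv.swap k k' = z := by
        exact conj_swap_self z hz k k' h
      rw [this, pfTerm_swap_eq A hA z hz k k' hk h]
    · rw [pfTerm_swap_ne A z hz k k' hk h, neg_neg]

theorem Alt.submatrix {M N : ℕ} {A : Matrix (Fin N) (Fin N) R} (hA : Alt A) (f : Fin M → Fin N) :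
    Alt (A.submatrix f f) := ⟨fun i => hA.1 _, fun i j => hA.2 _ _⟩

theorem pf_perm {N : ℕ} (A : Matrix (Fin N) (Fin N) R) (hA : Alt A) (σ : Equiv.Perm (Fin N)) :
    Pfaffian (A.submatrix σ σ) = ((Equiv.Perm.sign σ : ℤ) : R) * Pfaffian A := by
  cases N with
  | zero => 
    have : σ = 1 := Subsingleton.elim _ _
    simp [this]
  | succ N =>
    have hσ : σ ∈ Submonoid.closure (Set.range fun i : Fin N => Equiv.swap i.castSucc i.succ) := by
      rw [Equiv.Perm.mclosure_swap_castSucc_succ]; trivial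
    induction hσ using Submonoid.closure_induction generalizing A with
    | mem x hx =>
      obtain ⟨i, rfl⟩ := hx
      simp only
      rw [pf_swap A hA _ _ (by simp), Equiv.Perm.sign_swap (by simp [Fin.ext_iff])]
      simp
    | one => simp
    | mul x y hx hy ihx ihy =>
      have : A.submatrix (x * y : Equiv.Perm _) (x * y : Equiv.Perm _) = (A.submatrix x x).submatrix y y := rfl
      rw [this, ihy _ (hA.submatrix _), ihx _ hA]
      simp [mul_comm, mul_left_comm, mul_assoc]

theorem pf_eq_zero_adj {N : ℕ} (A : Matrix (Fin N) (Fin N) R) (hA : Alt A)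
    (k k' : Fin N) (hk : (k':ℕ) = k + 1) (h : ∀ j, A k j = A k' j) : Pfaffian A = 0 := by
  have h' : ∀ j, A j k = A j k' := fun j => by rw [hA.2, h, ← hA.2]
  have hkk : k ≠ k' := fun h => by rw [h] at hk; omega
  have hAA : A.submatrix (Equiv.swap k k') (Equiv.swap k k') = A := by
    ext i j
    simp only [Matrix.submatrix_apply, Equiv.swap_apply_def]
    split_ifs <;> simp_all
  rw [pf_eq]
  have hz0 : ∀ z : Equiv.Perm (Fin N), IsMat z → z k = k' → pfTerm A z = 0 := by
    intro z hz hzk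
    unfold pfTerm
    have hk'z : z k' = k := by rw [← hzk, hz.2]
    rw [Finset.prod_eq_zero (i := k'), mul_zero]
    · rw [Finset.mem_filter, hk'z, Fin.lt_def]; simp [hk]
    · rw [hk'z, ← h', hA.1]
  apply Finset.sum_involution (fun z _ => Equiv.swap k k' * z * Equiv.swap k k')
  · intro z hz
    simp only [Finset.mem_filter, Finset.mem_univ, true_and] at hz
    by_cases hzk : z k = k'
    · have : Equiv.swap k k' * z * Equiv.swap k k' = z := by
        exact conj_swap_self z hz k k' hzk
      rw [this, hz0 z hz hzk, add_zero]
    · rw [pfTerm_swap_ne A z hz k k' hk hzk, hAA, add_neg_cancel]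
  · intro z hz hne heq
    simp only [Finset.mem_filter, Finset.mem_univ, true_and] at hz
    by_cases hzk : z k = k'
    · exact hne (hz0 z hz hzk)
    · have h3 : z k' ≠ k := fun h => hzk (by rw [← h, hz.2])
      have h1 := congrArg (fun f : Equiv.Perm (Fin N) => f k) heq
      simp [Equiv.swap_apply_of_ne_of_ne h3 (hz.1 k')] at h1
      exact hkk h1.symm
  · intro z hz
    simp at hz ⊢; exact hz.conj _ (by simp)
  · intro z hz; ext; simp

theorem sign_mul_eq_zero {N : ℕ} (σ : Equiv.Perm (Fin N)) (x : R)
    (h : ((Equiv.Perm.sign σ : ℤ) : R) * x = 0) : x = 0 := by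
  rcases Int.units_eq_one_or (Equiv.Perm.sign σ) with h1 | h1 <;> simpa [h1] using h

theorem exists_perm_two {N : ℕ} (a b c d : Fin N) (hab : a ≠ b) (hcd : c ≠ d) :
    ∃ σ : Equiv.Perm (Fin N), σ a = c ∧ σ b = d := by
  refine ⟨Equiv.swap (Equiv.swap a c b) d * Equiv.swap a c, ?_, ?_⟩
  · simp
    rw [Equiv.swap_apply_of_ne_of_ne _ hcd]
    intro h
    have := congrArg (Equiv.swap a c) h
    simp at this; exact hab this
  · simp

theorem pf_eq_zero {N : ℕ} (A : Matrix (Fin N) (Fin N) R) (hA : Alt A)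
    (a b : Fin N) (hab : a ≠ b) (h : ∀ j, A a j = A b j) : Pfaffian A = 0 := by
  have hN : 1 < N := by
    have := Fintype.one_lt_card_iff.2 ⟨a, b, hab⟩
    simpa using this
  obtain ⟨σ, h1, h2⟩ := exists_perm_two (⟨0, by omega⟩ : Fin N) ⟨1, hN⟩ a b (by simp) hab
  apply sign_mul_eq_zero σ
  rw [← pf_perm A hA σ]
  apply pf_eq_zero_adj _ (hA.submatrix _) ⟨0, by omega⟩ ⟨1, hN⟩ (by simp)
  intro j
  simp [h1, h2, h]

theorem pf_congr_term {N : ℕ} (A : Matrix (Fin N) (Fin N) R) (hA : Alt A) (k : Fin N) :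
    ∃ D : Equiv.Perm (Fin N) → R, ∀ B : Matrix (Fin N) (Fin N) R, Alt B →
      (∀ i j, i ≠ k → j ≠ k → B i j = A i j) → ∀ z, IsMat z → pfTerm B z = B k (z k) * D z := by
  refine ⟨fun z => (-1) ^ ellFpfFin z * ((if z k < k then -1 else 1) *
    ∏ i ∈ (Finset.univ.filter (fun i => z i < i)).erase (if z k < k then k else z k), A (z i) i), ?_⟩
  intro B hB hBA z hz
  unfold pfTerm
  have hm : (if z k < k then k else z k) ∈ Finset.univ.filter (fun i => z i < i) := by
    split_ifs with h
    · simpa using h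
    · simp [hz.2]; exact lt_of_le_of_ne (not_lt.1 h) (hz.1 k).symm
  rw [← Finset.mul_prod_erase _ _ hm]
  have h1 : ∀ i ∈ (Finset.univ.filter (fun i => z i < i)).erase (if z k < k then k else z k),
      B (z i) i = A (z i) i := by
    intro i hi
    simp only [Finset.mem_erase, Finset.mem_filter, Finset.mem_univ, true_and] at hi
    apply hBA
    · intro h
      have hi2 : i = z k := by rw [← h, hz.2]
      subst hi2
      rw [hz.2] at hi
      rw [if_neg (not_lt.2 hi.2.le)] at hi
      exact hi.1 rfl
    · intro h
      subst h
      rw [if_pos hi.2] at hi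
      exact hi.1 rfl
  rw [Finset.prod_congr rfl h1]
  beta_reduce
  split_ifs with h
  · rw [hB.2 (z k) k]; ring
  · rw [hz.2]; ring

theorem pf_kernel {N : ℕ} (A : Matrix (Fin N) (Fin N) R) (hA : Alt A) (v : Fin N → R)
    (hv : ∀ j, ∑ l, v l * A l j = 0) (k : Fin N) : v k * Pfaffian A = 0 := by
  obtain ⟨D, hD⟩ := pf_congr_term A hA k
  let Bm : (Fin N → R) → Matrix (Fin N) (Fin N) R := fun c => Matrix.of fun i j =>
    if i = k then (if j = k then 0 else c j) else if j = k then - c i else A i j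
  have hBalt : ∀ c, Alt (Bm c) := by
    intro c
    refine ⟨fun i => ?_, fun i j => ?_⟩
    · by_cases h : i = k <;> simp [Bm, h, hA.1]
    · simp only [Bm, Matrix.of_apply]
      split_ifs
      · exact neg_zero.symm
      · exact (neg_neg _).symm
      · rfl
      · exact hA.2 _ _
  have hBp : ∀ c, Pfaffian (Bm c) =
      ∑ z ∈ Finset.univ.filter (fun z : Equiv.Perm (Fin N) => IsMat z), c (z k) * D z := by
    intro c
    rw [pf_eq]
    apply Finset.sum_congr rfl
    intro z hz
    simp only [Finset.mem_filter, Finset.mem_univ, true_and] at hz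
    rw [hD (Bm c) (hBalt c) _ z hz]
    · simp [Bm, hz.1 k]
    · intro i j h1 h2; simp [Bm, h1, h2]
  have hrow : ∀ l, l ≠ k → Pfaffian (Bm (A l)) = 0 := by
    intro l hl
    apply pf_eq_zero _ (hBalt _) l k hl
    intro j
    by_cases h : j = k
    · simp [Bm, h, hl, hA.1]
    · simp [Bm, h, hl]
  have hself : Bm (A k) = A := by
    ext i j
    simp only [Bm, Matrix.of_apply]
    split_ifs with h1 h2 h2
    · rw [h1, h2, hA.1]
    · rw [h1]
    · rw [h2, ← hA.2]
    · rfl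
  have hsum : ∑ l, v l * Pfaffian (Bm (A l)) = 0 := by
    simp_rw [hBp, Finset.mul_sum]
    rw [Finset.sum_comm]
    apply Finset.sum_eq_zero
    intro z _
    simp_rw [← mul_assoc]
    rw [← Finset.sum_mul, hv, zero_mul]
  rw [Finset.sum_eq_single k] at hsum
  · rwa [hself] at hsum
  · intro l _ hl; rw [hrow l hl, mul_zero]
  · simp

end

section
variable {R : Type*} [CommRing R]

def extMat {N : ℕ} (z : Equiv.Perm (Fin N)) : Equiv.Perm (Fin (N + 2)) :=
  finSumFinEquiv.permCongr (Equiv.sumCongr z (Equiv.swap (0 : Fin 2) 1))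

theorem extMat_cast {N : ℕ} (z : Equiv.Perm (Fin N)) (i : Fin N) :
    extMat z (Fin.castAdd 2 i) = Fin.castAdd 2 (z i) := by
  simp [extMat, Equiv.permCongr_apply]

theorem extMat_zero {N : ℕ} (z : Equiv.Perm (Fin N)) :
    extMat z (Fin.natAdd N 0) = Fin.natAdd N 1 := by
  simp [extMat, Equiv.permCongr_apply]

theorem extMat_one {N : ℕ} (z : Equiv.Perm (Fin N)) :
    extMat z (Fin.natAdd N 1) = Fin.natAdd N 0 := by
  simp [extMat, Equiv.permCongr_apply]

theorem fin_two_cases {N : ℕ} (i : Fin (N + 2)) :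
    (∃ j, i = Fin.castAdd 2 j) ∨ i = Fin.natAdd N 0 ∨ i = Fin.natAdd N 1 := by
  induction i using Fin.addCases with
  | left j => exact Or.inl ⟨j, rfl⟩
  | right j => right; fin_cases j <;> simp

theorem extMat_isMat {N : ℕ} (z : Equiv.Perm (Fin N)) (hz : IsMat z) : IsMat (extMat z) := by
  constructor
  · intro i
    rcases fin_two_cases i with ⟨j, rfl⟩ | rfl | rfl
    · rw [extMat_cast]; intro h; exact hz.1 j (by simpa using h)
    · rw [extMat_zero]; simp [Fin.ext_iff]
    · rw [extMat_one]; simp [Fin.ext_iff]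
  · intro i
    rcases fin_two_cases i with ⟨j, rfl⟩ | rfl | rfl
    · rw [extMat_cast, extMat_cast, hz.2]
    · rw [extMat_zero, extMat_one]
    · rw [extMat_one, extMat_zero]

theorem extMat_ell {N : ℕ} (z : Equiv.Perm (Fin N)) : ellFpfFin (extMat z) = ellFpfFin z := by
  unfold ellFpfFin
  symm
  apply Finset.card_bij (fun p _ => (Fin.castAdd 2 p.1, Fin.castAdd 2 p.2))
  · rintro ⟨a, b⟩ h
    rw [Finset.mem_filter] at h ⊢
    simp only [extMat_cast, Fin.lt_def, Fin.val_castAdd, Finset.mem_univ, true_and] at h ⊢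
    exact h
  · rintro ⟨a, b⟩ _ ⟨c, d⟩ _ h
    simpa using h
  · rintro ⟨a, b⟩ h
    rw [Finset.mem_filter] at h
    obtain ⟨-, h1, h2, h3⟩ := h
    simp only at h1 h2 h3
    rcases fin_two_cases b with ⟨b, rfl⟩ | rfl | rfl
    · rw [extMat_cast] at h3
      rcases fin_two_cases a with ⟨a, rfl⟩ | rfl | rfl
      · rw [extMat_cast] at h2
        exact ⟨(a, b), by rw [Finset.mem_filter]; exact ⟨Finset.mem_univ _, h1, h2, h3⟩, rfl⟩
      · simp [Fin.lt_def] at h3; have := (z b).2; omega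
      · simp [Fin.lt_def] at h3; have := (z b).2; omega
    · rw [extMat_zero] at h3
      simp only [Fin.lt_def, Fin.val_natAdd] at h1 h3
      simp at h1 h3; omega
    · rw [extMat_one] at h3
      simp only [Fin.lt_def, Fin.val_natAdd] at h1 h3
      simp at h1 h3; omega

theorem pfTerm_extMat {N : ℕ} (A : Matrix (Fin (N + 2)) (Fin (N + 2)) R) (z : Equiv.Perm (Fin N)) :
    pfTerm A (extMat z) = A (Fin.natAdd N 0) (Fin.natAdd N 1) *
      pfTerm (A.submatrix (Fin.castAdd 2) (Fin.castAdd 2)) z := by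
  unfold pfTerm
  rw [extMat_ell, mul_left_comm]
  congr 1
  rw [Finset.prod_filter, Finset.prod_filter, Fin.prod_univ_add, Fin.prod_univ_two, extMat_zero, extMat_one,
    if_neg (by simp [Fin.lt_def]), if_pos (by simp [Fin.lt_def]), one_mul, mul_comm]
  congr 1
  apply Finset.prod_congr rfl
  intro i _
  rw [extMat_cast]
  simp only [Fin.lt_def, Fin.val_castAdd, Matrix.submatrix_apply]

theorem exists_extMat {N : ℕ} (z : Equiv.Perm (Fin (N+2))) (hz : IsMat z)
    (h : z (Fin.natAdd N 0) = Fin.natAdd N 1) : ∃ y, IsMat y ∧ extMat y = z := by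
  have h1 : z (Fin.natAdd N 1) = Fin.natAdd N 0 := by rw [← h, hz.2]
  have h2 : ∀ i : Fin N, ∃ j : Fin N, z (Fin.castAdd 2 i) = Fin.castAdd 2 j := by
    intro i
    rcases fin_two_cases (z (Fin.castAdd 2 i)) with h3 | h3 | h3
    · exact h3
    · have := hz.2 (Fin.castAdd 2 i); rw [h3, h] at this
      simp [Fin.ext_iff] at this; omega
    · have := hz.2 (Fin.castAdd 2 i); rw [h3, h1] at this
      simp [Fin.ext_iff] at this; omega
  choose f hf using h2
  have hff : Function.Involutive f := by
    intro i
    have := hz.2 (Fin.castAdd 2 i)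
    rw [hf, hf] at this
    simpa using this
  refine ⟨hff.toPerm, ⟨fun i => ?_, fun i => ?_⟩, ?_⟩
  · intro h3
    apply hz.1 (Fin.castAdd 2 i)
    rw [hf]; congr 1
  · exact hff i
  · ext i
    rcases fin_two_cases i with ⟨j, rfl⟩ | rfl | rfl
    · rw [extMat_cast, hf]; rfl
    · rw [extMat_zero, h]
    · rw [extMat_one, h1]

theorem extMat_inj {N : ℕ} (y z : Equiv.Perm (Fin N)) (h : extMat y = extMat z) : y = z := by
  ext i
  have := congrArg (fun f : Equiv.Perm (Fin (N+2)) => f (Fin.castAdd 2 i)) h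
  simp only [extMat_cast] at this
  have h2 : y i = z i := by simpa using this
  rw [h2]

theorem pf_split {N : ℕ} (A : Matrix (Fin (N + 2)) (Fin (N + 2)) R) :
    Pfaffian A = A (Fin.natAdd N 0) (Fin.natAdd N 1) *
      Pfaffian (A.submatrix (Fin.castAdd 2) (Fin.castAdd 2)) +
      ∑ z ∈ (Finset.univ.filter (fun z : Equiv.Perm (Fin (N+2)) => IsMat z)).filter
        (fun z => ¬ z (Fin.natAdd N 0) = Fin.natAdd N 1), pfTerm A z := by
  rw [pf_eq A, ← Finset.sum_filter_add_sum_filter_not _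
    (fun z : Equiv.Perm (Fin (N+2)) => z (Fin.natAdd N 0) = Fin.natAdd N 1)]
  congr 1
  rw [pf_eq, Finset.mul_sum]
  symm
  apply Finset.sum_bij (fun z _ => extMat z)
  · intro z hz
    rw [Finset.mem_filter] at hz
    rw [Finset.mem_filter, Finset.mem_filter]
    exact ⟨⟨Finset.mem_univ _, extMat_isMat z hz.2⟩, extMat_zero z⟩
  · intro y _ z _ h; exact extMat_inj y z h
  · intro z hz
    rw [Finset.mem_filter, Finset.mem_filter] at hz
    obtain ⟨y, hy, hyz⟩ := exists_extMat z hz.1.2 hz.2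
    exact ⟨y, by rw [Finset.mem_filter]; exact ⟨Finset.mem_univ _, hy⟩, hyz⟩
  · intro z _
    rw [pfTerm_extMat]

theorem pf_change {N : ℕ} (A A' : Matrix (Fin (N + 2)) (Fin (N + 2)) R)
    (h : ∀ i j, ¬ (i = Fin.natAdd N 0 ∧ j = Fin.natAdd N 1) → ¬ (j = Fin.natAdd N 0 ∧ i = Fin.natAdd N 1) →
      A i j = A' i j) :
    Pfaffian A = Pfaffian A' + (A (Fin.natAdd N 0) (Fin.natAdd N 1) - A' (Fin.natAdd N 0) (Fin.natAdd N 1)) *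
      Pfaffian (A.submatrix (Fin.castAdd 2) (Fin.castAdd 2)) := by
  rw [pf_split A, pf_split A']
  have h1 : A.submatrix (Fin.castAdd 2) (Fin.castAdd 2) = A'.submatrix (Fin.castAdd 2) (Fin.castAdd 2) := by
    ext i j
    simp only [Matrix.submatrix_apply]
    apply h
    · rintro ⟨h1, -⟩; simp [Fin.ext_iff] at h1; omega
    · rintro ⟨h1, -⟩; simp [Fin.ext_iff] at h1; omega
  rw [h1]
  have h2 : ∀ z ∈ (Finset.univ.filter (fun z : Equiv.Perm (Fin (N+2)) => IsMat z)).filter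
        (fun z => ¬ z (Fin.natAdd N 0) = Fin.natAdd N 1), pfTerm A z = pfTerm A' z := by
    intro z hz
    rw [Finset.mem_filter, Finset.mem_filter] at hz
    unfold pfTerm
    congr 1
    apply Finset.prod_congr rfl
    intro i hi
    apply h
    · rintro ⟨h3, h4⟩; apply hz.2; rw [← h3, hz.1.2.2, h4]
    · rintro ⟨h3, h4⟩; apply hz.2; rw [← h4, h3]
  rw [Finset.sum_congr rfl h2]
  ring

end

section

noncomputable def IR (K : Type*) [Field K] (n : ℕ) (r : ℕ → ℕ → ℕ) : Ideal (MvPolynomial (SSVar n) K) :=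
  Ideal.span {f | ∃ R : Finset (Fin n), R.Nonempty ∧ Even R.card ∧
    (∃ i j : ℕ, 1 ≤ j ∧ j ≤ i ∧ i ≤ n ∧ (∀ a ∈ R, (a : ℕ) + 1 ≤ i) ∧
      r i j < (R.filter fun a : Fin n => (a : ℕ) + 1 ≤ j).card) ∧
    f = pfUss K R}

theorem IssIdeal_eq_IR (K : Type*) [Field K] (n : ℕ) (z : Equiv.Perm ℕ) :
    IssIdeal K n z = IR K n (rnk z) := rfl

theorem Uss_alt (K : Type*) [Field K] (n : ℕ) : Alt (Uss K n) := by
  constructor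
  · intro i; simp [Uss]
  · intro i j
    simp only [Uss, Matrix.of_apply]
    split_ifs with h1 h2 h2 h2
    · exact absurd h1 (not_lt.2 h2.le)
    · simp
    · simp
    · simp

variable {K : Type*} [Field K] {n : ℕ}

theorem pfUss_cast (R : Finset (Fin n)) (N : ℕ) (h : R.card = N) :
    pfUss K R = Pfaffian ((Uss K n).submatrix (R.orderEmbOfFin h) (R.orderEmbOfFin h)) := by
  subst h; rfl

theorem pf_lab_eq {N : ℕ} (lab : Fin N → Fin n) (hl : Function.Injective lab) :
    ∃ σ : Equiv.Perm (Fin N), Pfaffian ((Uss K n).submatrix lab lab) =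
      ((Equiv.Perm.sign σ : ℤ) : MvPolynomial (SSVar n) K) * pfUss K (Finset.univ.image lab) := by
  have hc : (Finset.univ.image lab).card = N := by
    rw [Finset.card_image_of_injective _ hl]; simp
  have h1 : ∀ x, ∃ y, (Finset.univ.image lab).orderEmbOfFin hc y = lab x := by
    intro x
    have : lab x ∈ Set.range ((Finset.univ.image lab).orderEmbOfFin hc) := by
      rw [Finset.range_orderEmbOfFin]; simp
    exact this
  choose f hf using h1
  have hfi : Function.Injective f := by
    intro x y h; apply hl; rw [← hf, ← hf, h]
  have hfb : Function.Bijective f := Finite.injective_iff_bijective.1 hfi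
  refine ⟨Equiv.ofBijective f hfb, ?_⟩
  rw [pfUss_cast _ N hc, ← pf_perm _ ((Uss_alt K n).submatrix _)]
  congr 1
  ext i j : 2
  simp [hf]

theorem sign_mul_mem {S : Type*} [CommRing S] {N : ℕ} (σ : Equiv.Perm (Fin N)) (x : S) (I : Ideal S) :
    ((Equiv.Perm.sign σ : ℤ) : S) * x ∈ I ↔ x ∈ I := by
  rcases Int.units_eq_one_or (Equiv.Perm.sign σ) with h1 | h1 <;> simp [h1]

theorem mem_IR (r : ℕ → ℕ → ℕ) (i j : ℕ) (hj : 1 ≤ j) (hji : j ≤ i) (hi : i ≤ n) (N : ℕ) (hN : Even N) :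
    ∀ (H : Matrix (Fin N) (Fin N) (MvPolynomial (SSVar n) K)) (_ : Alt H) (lab : Fin N → Fin n)
    (isA : Fin N → Prop) [DecidablePred isA]
    (_ : ∀ s t, ¬ (isA s ∧ isA t) → H s t = Uss K n (lab s) (lab t))
    (_ : ∀ s, (lab s : ℕ) + 1 ≤ i)
    (_ : ∀ s t, ¬ isA s → ¬ isA t → lab s = lab t → s = t)
    (_ : ∀ s, ¬ isA s → (lab s : ℕ) + 1 ≤ j)
    (_ : r i j < (Finset.univ.filter fun s => ¬ isA s).card), Pfaffian H ∈ IR K n r := by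
  induction N using Nat.strong_induction_on with
  | _ N IH =>
  suffices key : ∀ (d : ℕ) (H : Matrix (Fin N) (Fin N) (MvPolynomial (SSVar n) K)) (_ : Alt H) (lab : Fin N → Fin n)
    (isA : Fin N → Prop) [DecidablePred isA]
    (_ : ∀ s t, ¬ (isA s ∧ isA t) → H s t = Uss K n (lab s) (lab t))
    (_ : ∀ s, (lab s : ℕ) + 1 ≤ i)
    (_ : ∀ s t, ¬ isA s → ¬ isA t → lab s = lab t → s = t)
    (_ : ∀ s, ¬ isA s → (lab s : ℕ) + 1 ≤ j)
    (_ : r i j < (Finset.univ.filter fun s => ¬ isA s).card)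
    (S : Finset (Fin N × Fin N)) (_ : S.card ≤ d) (_ : ∀ s t, H s t ≠ Uss K n (lab s) (lab t) → (s, t) ∈ S),
     Pfaffian H ∈ IR K n r by
    intro H hH lab isA _ h1 h2 h3 h4 h5
    exact key _ H hH lab isA h1 h2 h3 h4 h5 Finset.univ le_rfl (by simp)
  intro d
  induction d with
  | zero =>
    intro H hH lab isA _ h1 h2 h3 h4 h5 S hS hS2
    have hHU : H = (Uss K n).submatrix lab lab := by
      ext1 s t
      by_contra hne
      have := hS2 s t hne
      simp at hS; simp [hS] at this
    rw [hHU]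
    by_cases hl : Function.Injective lab
    · obtain ⟨σ, hσ⟩ := pf_lab_eq (K := K) lab hl
      rw [hσ, sign_mul_mem]
      apply Ideal.subset_span
      refine ⟨_, ?_, ?_, ⟨i, j, hj, hji, hi, ?_, ?_⟩, rfl⟩
      · have : (Finset.univ.filter fun s => ¬ isA s).Nonempty := by
          rw [← Finset.card_pos]; omega
        obtain ⟨s, hs⟩ := this
        exact ⟨lab s, by simp⟩
      · rw [Finset.card_image_of_injective _ hl]; simpa using hN
      · simpa using h2
      · refine lt_of_lt_of_le h5 ?_
        rw [← Finset.card_image_of_injective _ hl]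
        apply Finset.card_le_card
        intro x hx
        simp only [Finset.mem_image, Finset.mem_filter, Finset.mem_univ, true_and] at hx ⊢
        obtain ⟨s, hs, rfl⟩ := hx
        exact ⟨⟨s, rfl⟩, h4 s hs⟩
    · simp only [Function.Injective] at hl
      push Not at hl
      obtain ⟨a, b, hab, hne⟩ := hl
      rw [pf_eq_zero _ ((Uss_alt K n).submatrix _) a b hne]
      · exact Ideal.zero_mem _
      · intro j; simp [hab]
  | succ d ihd =>
    intro H hH lab isA _ h1 h2 h3 h4 h5 S hS hS2
    by_cases hall : ∀ s t, H s t = Uss K n (lab s) (lab t)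
    · exact ihd H hH lab isA h1 h2 h3 h4 h5 ∅ (by simp) (fun s t h => absurd (hall s t) h)
    · push Not at hall
      obtain ⟨s, t, hst⟩ := hall
      have hA : isA s ∧ isA t := by by_contra h; exact hst (h1 s t h)
      have hsne : s ≠ t := by
        rintro rfl; apply hst; rw [hH.1, (Uss_alt K n).1]
      let H' : Matrix (Fin N) (Fin N) (MvPolynomial (SSVar n) K) := Matrix.of fun a b =>
        if (a = s ∧ b = t) ∨ (a = t ∧ b = s) then Uss K n (lab a) (lab b) else H a b
      have hH' : Alt H' := by
        constructor
        · intro a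
          simp only [H', Matrix.of_apply]
          split_ifs
          · exact (Uss_alt K n).1 _
          · exact hH.1 _
        · intro a b
          simp only [H', Matrix.of_apply]
          have : ((b = s ∧ a = t) ∨ (b = t ∧ a = s)) ↔ ((a = s ∧ b = t) ∨ (a = t ∧ b = s)) := by tauto
          simp only [this]
          split_ifs
          · exact (Uss_alt K n).2 _ _
          · exact hH.2 _ _
      have hm' : Pfaffian H' ∈ IR K n r := by
        apply ihd H' hH' lab isA _ h2 h3 h4 h5 (S.erase (s, t))
        · have := Finset.card_erase_of_mem (hS2 s t hst); omega
        · intro a b hab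
          simp only [H', Matrix.of_apply] at hab
          split_ifs at hab with h
          · exact absurd rfl hab
          · rw [Finset.mem_erase]
            refine ⟨?_, hS2 a b hab⟩
            intro h'; simp only [Prod.mk.injEq] at h'; tauto
        · intro a b hab
          simp only [H', Matrix.of_apply]
          split_ifs with h
          · rfl
          · exact h1 a b hab
      have hN2 : 2 ≤ N := by
        have := Fintype.one_lt_card_iff.2 ⟨s, t, hsne⟩
        simp at this; omega
      obtain ⟨M, rfl⟩ : ∃ M, N = M + 2 := ⟨N - 2, by omega⟩
      obtain ⟨σ, hσ1, hσ2⟩ := exists_perm_two (Fin.natAdd M (0 : Fin 2)) (Fin.natAdd M 1) s t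
        (by simp [Fin.ext_iff]) hsne
      have hch := pf_change (H.submatrix σ σ) (H'.submatrix σ σ) (by
        intro a b ha hb
        simp only [Matrix.submatrix_apply, H', Matrix.of_apply]
        rw [if_neg]
        rintro (⟨e1, e2⟩ | ⟨e1, e2⟩)
        · apply ha; exact ⟨σ.injective (by rw [e1, hσ1]), σ.injective (by rw [e2, hσ2])⟩
        · apply hb; exact ⟨σ.injective (by rw [e2, hσ1]), σ.injective (by rw [e1, hσ2])⟩)
      rw [← sign_mul_mem σ, ← pf_perm _ hH, hch]
      apply Ideal.add_mem
      · rw [pf_perm _ hH', sign_mul_mem]; exact hm'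
      apply Ideal.mul_mem_left
      refine IH M (by omega) (by rwa [Nat.even_add, iff_true_right even_two] at hN) _ ((hH.submatrix _).submatrix _)
        (fun a => lab (σ (Fin.castAdd 2 a))) (fun a => isA (σ (Fin.castAdd 2 a))) ?_ ?_ ?_ ?_ ?_
      · intro a b hab; exact h1 _ _ hab
      · intro a; exact h2 _
      · intro a b ha hb hab; have := σ.injective (h3 _ _ ha hb hab); simpa using this
      · intro a ha; exact h4 _ ha
      · refine lt_of_lt_of_le h5 ?_
        apply Finset.card_le_card_of_surjOn (fun a => σ (Fin.castAdd 2 a))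
        intro x hx
        simp only [Finset.coe_filter, Finset.mem_univ, true_and, Set.mem_ofPred_eq, Set.mem_image] at hx ⊢
        obtain ⟨y, rfl⟩ := σ.surjective x
        rcases fin_two_cases y with ⟨y, rfl⟩ | rfl | rfl
        · exact ⟨y, hx, rfl⟩
        · rw [hσ1] at hx; exact absurd hA.1 hx
        · rw [hσ2] at hx; exact absurd hA.2 hx

end

section

/-- exponent -/
def eP (n : ℕ) (a b : Fin n) : ℕ := (max a b : Fin n).val * n + (n - 1 - (min a b : Fin n).val)

def Bb (n : ℕ) : ℕ := 2 * n ^ 2 + 1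

def wv (n : ℕ) (v : SSVar n) : ℕ := Bb n ^ eP n v.1.1 v.1.2

noncomputable def wt {n : ℕ} (m : SSVar n →₀ ℕ) : ℕ := Finsupp.weight (wv n) m

def Low {K : Type*} [Field K] {n : ℕ} (w : ℕ) (f : MvPolynomial (SSVar n) K) : Prop :=
  ∀ d, f.coeff d ≠ 0 → wt d < w

theorem eP_comm (n : ℕ) (a b : Fin n) : eP n a b = eP n b a := by
  unfold eP; rw [max_comm, min_comm]

theorem eP_lt (n : ℕ) (a b x y : Fin n) (hxy : x < y) (h : max a b < y ∨ (max a b = y ∧ x < min a b)) :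
    eP n a b < eP n x y := by
  unfold eP
  rw [max_eq_right hxy.le, min_eq_left hxy.le]
  rcases h with h | ⟨h, h'⟩
  · rw [Fin.lt_def] at h
    have h2 : ((max a b : Fin n) : ℕ) * n + n ≤ y * n := by
      calc _ = ((max a b : Fin n) + 1 : ℕ) * n := by ring
        _ ≤ _ := Nat.mul_le_mul_right _ h
    have := a.2
    omega
  · rw [h, Fin.lt_def] at *
    have := (min a b).2
    omega

section
variable {K : Type*} [Field K] {n : ℕ}

theorem Low.add {w : ℕ} {f g : MvPolynomial (SSVar n) K} (hf : Low w f) (hg : Low w g) : Low w (f + g) := by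
  intro d hd
  by_cases h : f.coeff d = 0
  · exact hg d (by intro h'; apply hd; simp [h, h'])
  · exact hf d h

theorem Low.zero {w : ℕ} : Low w (0 : MvPolynomial (SSVar n) K) := by
  intro d hd; simp at hd

theorem Low.sum {w : ℕ} {ι : Type*} (s : Finset ι) (f : ι → MvPolynomial (SSVar n) K)
    (h : ∀ i ∈ s, Low w (f i)) : Low w (∑ i ∈ s, f i) := by
  classical
  induction s using Finset.induction_on with
  | empty => simpa using Low.zero
  | insert a s ha ih =>
    rw [Finset.sum_insert ha]
    exact (h a (by simp)).add (ih fun i hi => h i (by simp [hi]))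

theorem Low.mono {w w' : ℕ} (hw : w ≤ w') {f : MvPolynomial (SSVar n) K} (h : Low w f) : Low w' f :=
  fun d hd => (h d hd).trans_le hw

theorem Low.monomial_mul {w : ℕ} {f : MvPolynomial (SSVar n) K} (h : Low w f) (m : SSVar n →₀ ℕ) (c : K) :
    Low (wt m + w) (MvPolynomial.monomial m c * f) := by
  intro d hd
  rw [MvPolynomial.coeff_monomial_mul'] at hd
  split_ifs at hd with hmd
  · have h1 : f.coeff (d - m) ≠ 0 := fun h => hd (by rw [h, mul_zero])
    have h2 := h _ h1
    have h3 : wt d = wt m + wt (d - m) := by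
      unfold wt; rw [← map_add, add_tsub_cancel_of_le hmd]
    omega
  · exact absurd rfl hd

theorem Uss_form (a b : Fin n) (hab : a ≠ b) (v : SSVar n) (h1 : v.1.1 = max a b) (h2 : v.1.2 = min a b) :
    ∃ c : K, c ≠ 0 ∧ Uss K n a b = MvPolynomial.monomial (Finsupp.single v 1) c := by
  obtain ⟨⟨y, x⟩, hv⟩ := v
  simp only at h1 h2
  subst h1 h2
  rcases lt_or_gt_of_ne hab with h | h
  · refine ⟨-1, by simp, ?_⟩
    have e1 : max a b = b := max_eq_right h.le
    have e2 : min a b = a := min_eq_left h.le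
    simp only [Uss, Matrix.of_apply, h, dif_pos, not_lt.2 h.le, dif_neg, not_false_eq_true]
    rw [MvPolynomial.X, ← map_neg]
    congr 3
    simp [e1, e2]
  · refine ⟨1, by simp, ?_⟩
    have e1 : max a b = a := max_eq_left h.le
    have e2 : min a b = b := min_eq_right h.le
    simp only [Uss, Matrix.of_apply, h, dif_pos]
    rw [MvPolynomial.X]
    congr 3
    simp [e1, e2]

theorem Uss_hom (a b : Fin n) :
    MvPolynomial.IsWeightedHomogeneous (wv n) (Uss K n a b) (Bb n ^ eP n a b) := by
  by_cases hab : a = b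
  · subst hab; rw [(Uss_alt K n).1]; exact MvPolynomial.isWeightedHomogeneous_zero _ _ _
  · obtain ⟨c, -, hc⟩ := Uss_form (K := K) a b hab ⟨(max a b, min a b), by simp [Ne.symm hab]⟩ rfl rfl
    rw [hc]
    apply MvPolynomial.isWeightedHomogeneous_monomial
    rw [Finsupp.weight_single]
    simp only [wv, eP, one_smul]
    rw [max_eq_left (by simp), min_eq_right (by simp)]

theorem two_sum {N : ℕ} (z : Equiv.Perm (Fin N)) (hz : IsMat z) (f : Fin N → Fin N → ℕ)
    (hf : ∀ a b, f a b = f b a) :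
    2 * ∑ i ∈ Finset.univ.filter (fun i => z i < i), f (z i) i = ∑ i, f i (z i) := by
  rw [← Finset.sum_filter_add_sum_filter_not Finset.univ (fun i => z i < i), two_mul]
  congr 1
  · apply Finset.sum_congr rfl; intro i _; exact hf _ _
  · apply Finset.sum_nbij' z z
    · intro i hi
      rw [Finset.mem_filter] at hi ⊢
      rw [hz.2]; exact ⟨Finset.mem_univ _, not_lt.2 hi.2.le⟩
    · intro i hi
      rw [Finset.mem_filter] at hi ⊢
      rw [hz.2]; exact ⟨Finset.mem_univ _, lt_of_le_of_ne (not_lt.1 hi.2) (hz.1 i).symm⟩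
    · intro i _; exact hz.2 i
    · intro i _; exact hz.2 i
    · intro i _; rw [hz.2]

theorem lead_cmp {N : ℕ} (hN : N < Bb n) (lab : Fin N → Fin n) (isA : Fin N → Prop)
    (τ : Equiv.Perm (Fin N)) (hτ : IsMat τ) (ρ : Fin N → ℕ) (hρ : ∀ s, ρ (τ s) = ρ s)
    (hyp : ∀ s P Q, ρ s ≤ ρ P → ρ s ≤ ρ Q → ¬ (P = s ∧ Q = τ s) → ¬ (P = τ s ∧ Q = s) → P ≠ Q → 
      ¬ (isA P ∧ isA Q) → lab P ≠ lab Q → eP n (lab P) (lab Q) < eP n (lab s) (lab (τ s)))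
    (z : Equiv.Perm (Fin N)) (hz : IsMat z) (hzτ : z ≠ τ)
    (h0 : ∀ i, ¬ (isA i ∧ isA (z i)) ∧ lab i ≠ lab (z i)) :
    ∑ i, Bb n ^ eP n (lab i) (lab (z i)) < ∑ i, Bb n ^ eP n (lab i) (lab (τ i)) := by
  have hne : (Finset.univ.filter fun s => z s ≠ τ s).Nonempty := by
    by_contra h
    rw [Finset.not_nonempty_iff_eq_empty, Finset.filter_eq_empty_iff] at h
    apply hzτ; ext s
    have := h (Finset.mem_univ s)
    rw [not_not] at this; rw [this]
  obtain ⟨s, hs, hmin⟩ := Finset.exists_min_image _ ρ hne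
  rw [Finset.mem_filter] at hs
  have hs := hs.2
  have hmin : ∀ t, ρ t < ρ s → z t = τ t := by
    intro t ht
    by_contra h
    have := hmin t (by rw [Finset.mem_filter]; exact ⟨Finset.mem_univ _, h⟩)
    omega
  rw [← Finset.sum_filter_add_sum_filter_not Finset.univ (fun i => ρ i < ρ s),
    ← Finset.sum_filter_add_sum_filter_not Finset.univ (fun i => ρ i < ρ s)
      (fun i => Bb n ^ eP n (lab i) (lab (τ i)))]
  apply add_lt_add_of_le_of_lt
  · apply le_of_eq
    apply Finset.sum_congr rfl
    intro i hi
    rw [Finset.mem_filter] at hi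
    rw [hmin i hi.2]
  · have hb : ∀ i, ¬ ρ i < ρ s → eP n (lab i) (lab (z i)) < eP n (lab s) (lab (τ s)) := by
      intro i hi
      apply hyp s i (z i) (not_lt.1 hi) _ _ _ (hz.1 i).symm (h0 i).1 (h0 i).2
      · by_contra h
        rw [not_le] at h
        have h1 := hmin _ h
        rw [hz.2] at h1
        have := hρ (z i); rw [← h1] at this; omega
      · rintro ⟨rfl, h⟩; exact hs h
      · rintro ⟨rfl, h⟩; apply hs; rw [← h, hz.2, h]
    have he : 0 < eP n (lab s) (lab (τ s)) := lt_of_le_of_lt (Nat.zero_le _) (hb s (lt_irrefl _))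
    have hB : 1 ≤ Bb n := by unfold Bb; omega
    calc ∑ i ∈ Finset.univ.filter (fun i => ¬ ρ i < ρ s), Bb n ^ eP n (lab i) (lab (z i))
        ≤ ∑ i ∈ Finset.univ.filter (fun i => ¬ ρ i < ρ s), Bb n ^ (eP n (lab s) (lab (τ s)) - 1) := by
          apply Finset.sum_le_sum
          intro i hi
          rw [Finset.mem_filter] at hi
          apply Nat.pow_le_pow_right hB
          have := hb i hi.2; omega
      _ = (Finset.univ.filter (fun i => ¬ ρ i < ρ s)).card * Bb n ^ (eP n (lab s) (lab (τ s)) - 1) := by simp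
      _ ≤ N * Bb n ^ (eP n (lab s) (lab (τ s)) - 1) := by
          apply Nat.mul_le_mul_right
          refine (Finset.card_le_univ _).trans (by simp)
      _ < Bb n * Bb n ^ (eP n (lab s) (lab (τ s)) - 1) := by
          apply Nat.mul_lt_mul_of_pos_right hN; positivity
      _ = Bb n ^ (eP n (lab s) (lab (τ s))) := by
          rw [← pow_succ', Nat.sub_add_cancel he]
      _ ≤ _ := by
          apply Finset.single_le_sum (f := fun i => Bb n ^ eP n (lab i) (lab (τ i))) (fun _ _ => Nat.zero_le _)
          simp

noncomputable def Hmat (K : Type*) [Field K] {n N : ℕ} (lab : Fin N → Fin n) (isA : Fin N → Prop)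
    [DecidablePred isA] : Matrix (Fin N) (Fin N) (MvPolynomial (SSVar n) K) :=
  Matrix.of fun s t => if isA s ∧ isA t then 0 else Uss K n (lab s) (lab t)

theorem Hmat_hom {N : ℕ} (lab : Fin N → Fin n) (isA : Fin N → Prop) [DecidablePred isA]
    (z : Equiv.Perm (Fin N)) :
    MvPolynomial.IsWeightedHomogeneous (wv n) (pfTerm (Hmat K lab isA) z)
     (∑ i ∈ Finset.univ.filter (fun i => z i < i), Bb n ^ eP n (lab (z i)) (lab i)) := by
  unfold pfTerm
  have h1 : ((-1) ^ ellFpfFin z : MvPolynomial (SSVar n) K) = MvPolynomial.C ((-1) ^ ellFpfFin z) := by simp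
  rw [h1]
  apply MvPolynomial.IsWeightedHomogeneous.C_mul
  apply MvPolynomial.IsWeightedHomogeneous.prod
  intro i _
  simp only [Hmat, Matrix.of_apply]
  split_ifs
  · exact MvPolynomial.isWeightedHomogeneous_zero _ _ _
  · exact Uss_hom _ _

theorem prod_mono_aux {ι : Type*} (s : Finset ι) (f : ι → SSVar n →₀ ℕ) (c : ι → K) :
    ∏ i ∈ s, MvPolynomial.monomial (f i) (c i) = MvPolynomial.monomial (∑ i ∈ s, f i) (∏ i ∈ s, c i) := by
  classical
  induction s using Finset.induction_on with
  | empty => simp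
  | insert a s ha ih =>
    rw [Finset.prod_insert ha, ih, MvPolynomial.monomial_mul, Finset.sum_insert ha, Finset.prod_insert ha]

theorem lead {N : ℕ} (hN : N < Bb n) (lab : Fin N → Fin n) (isA : Fin N → Prop) [DecidablePred isA]
    (τ : Equiv.Perm (Fin N)) (hτ : IsMat τ) (ρ : Fin N → ℕ) (hρ : ∀ s, ρ (τ s) = ρ s)
    (hyp : ∀ s P Q, ρ s ≤ ρ P → ρ s ≤ ρ Q → ¬ (P = s ∧ Q = τ s) → ¬ (P = τ s ∧ Q = s) → P ≠ Q → 
      ¬ (isA P ∧ isA Q) → lab P ≠ lab Q → eP n (lab P) (lab Q) < eP n (lab s) (lab (τ s)))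
    (v : Fin N → SSVar n)
    (hv : ∀ i, τ i < i → (v i).1.1 = max (lab (τ i)) (lab i) ∧ (v i).1.2 = min (lab (τ i)) (lab i))
    (hA : ∀ i, ¬ (isA i ∧ isA (τ i)) ∧ lab i ≠ lab (τ i))
    (m : SSVar n →₀ ℕ)
    (hm : ∑ i ∈ Finset.univ.filter (fun i => τ i < i), Finsupp.single (v i) 1 ≤ m) :
    ∃ q : MvPolynomial (SSVar n) K, Low (wt m) (q * Pfaffian (Hmat K lab isA) - MvPolynomial.monomial m 1) := by
  set m0 := ∑ i ∈ Finset.univ.filter (fun i => τ i < i), Finsupp.single (v i) 1 with hm0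
  have hτt : ∃ c : K, c ≠ 0 ∧ pfTerm (Hmat K lab isA) τ = MvPolynomial.monomial m0 c := by
    have h1 : ∀ i, ∃ c : K, c ≠ 0 ∧ (τ i < i → Hmat K lab isA (τ i) i =
        MvPolynomial.monomial (Finsupp.single (v i) 1) c) := by
      intro i
      by_cases h : τ i < i
      · obtain ⟨c, hc, hc2⟩ := Uss_form (K := K) (lab (τ i)) (lab i) (hA i).2.symm (v i) (hv i h).1 (hv i h).2
        refine ⟨c, hc, fun _ => ?_⟩
        rw [← hc2]
        simp only [Hmat, Matrix.of_apply]
        rw [if_neg]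
        intro h; exact (hA i).1 h.symm
      · exact ⟨1, one_ne_zero, fun h' => absurd h' h⟩
    choose c hc hc2 using h1
    refine ⟨(-1) ^ ellFpfFin τ * ∏ i ∈ Finset.univ.filter (fun i => τ i < i), c i, ?_, ?_⟩
    · apply mul_ne_zero
      · apply pow_ne_zero; simp
      · exact Finset.prod_ne_zero_iff.2 fun i _ => hc i
    · unfold pfTerm
      rw [Finset.prod_congr rfl (fun i hi => hc2 i (Finset.mem_filter.1 hi).2)]
      rw [← MvPolynomial.C_mul_monomial, hm0, ← prod_mono_aux]
      simp
  obtain ⟨c, hc, hcτ⟩ := hτt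
  have h2w : 2 * wt m0 = ∑ i, Bb n ^ eP n (lab i) (lab (τ i)) := by
    rw [← two_sum τ hτ (fun a b => Bb n ^ eP n (lab a) (lab b)) (fun a b => by rw [eP_comm])]
    congr 1
    have h := Hmat_hom (K := K) lab isA τ
    rw [hcτ] at h
    have := h (d := m0) (by simp [hc])
    exact this
  refine ⟨MvPolynomial.monomial (m - m0) c⁻¹, ?_⟩
  rw [pf_eq, ← Finset.add_sum_erase _ _ (a := τ) (by rw [Finset.mem_filter]; exact ⟨Finset.mem_univ _, hτ⟩),
    hcτ, mul_add, MvPolynomial.monomial_mul, inv_mul_cancel₀ hc, tsub_add_cancel_of_le hm, add_sub_cancel_left]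
  have hw : wt m = wt (m - m0) + wt m0 := by
    unfold wt; rw [← map_add, tsub_add_cancel_of_le hm]
  rw [hw]
  apply Low.monomial_mul
  apply Low.sum
  intro z hz
  rw [Finset.mem_erase, Finset.mem_filter] at hz
  obtain ⟨hzτ, -, hz⟩ := hz
  intro d hd
  have hwd := Hmat_hom (K := K) lab isA z hd
  have hlt := lead_cmp hN lab isA τ hτ ρ hρ hyp z hz hzτ (by
    have hne : pfTerm (Hmat K lab isA) z ≠ 0 := by
      intro h; rw [h] at hd; simp at hd
    have hall : ∀ i, z i < i → Hmat K lab isA (z i) i ≠ 0 := by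
      intro i hi h
      apply hne
      unfold pfTerm
      rw [Finset.prod_eq_zero (f := fun i => Hmat K lab isA (z i) i) (i := i)
        (by rw [Finset.mem_filter]; exact ⟨Finset.mem_univ _, hi⟩) h, mul_zero]
    have hall2 : ∀ i, z i < i → ¬ (isA i ∧ isA (z i)) ∧ lab i ≠ lab (z i) := by
      intro i hi
      have := hall i hi
      simp only [Hmat, Matrix.of_apply] at this
      constructor
      · intro h; rw [if_pos h.symm] at this; exact this rfl
      · intro h; rw [h, (Uss_alt K n).1] at this; simp at this
    intro i
    rcases lt_or_gt_of_ne (hz.1 i) with h | h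
    · exact hall2 i h
    · have := hall2 (z i) (by rwa [hz.2])
      rw [hz.2] at this
      exact ⟨fun h => this.1 h.symm, this.2.symm⟩)
  rw [← two_sum z hz (fun a b => Bb n ^ eP n (lab a) (lab b)) (fun a b => by rw [eP_comm]), ← h2w] at hlt
  have : wt d = ∑ i ∈ Finset.univ.filter (fun i => z i < i), Bb n ^ eP n (lab (z i)) (lab i) := hwd
  omega

end
end

section

theorem eP_lt' (n : ℕ) (a b x y : Fin n) (hxy : x < y)
    (h : (a < y ∧ b < y) ∨ (a ≤ y ∧ b ≤ y ∧ x < a ∧ x < b)) :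
    eP n a b < eP n x y := by
  apply eP_lt n a b x y hxy
  rcases h with h | ⟨h1, h2, h3, h4⟩
  · left; exact max_lt h.1 h.2
  · rcases lt_or_eq_of_le (max_le h1 h2) with h | h
    · exact Or.inl h
    · exact Or.inr ⟨h, lt_min h3 h4⟩

structure Cfg {n : ℕ} (U L : Finset (Fin n × Fin n)) (i j : ℕ) : Prop where
  hU : ∀ u ∈ U, u.1 < u.2
  hL : ∀ u ∈ L, u.1 < u.2
  nU : ∀ u ∈ U, ∀ v ∈ U, u ≠ v → (u.1 < v.1 ∧ v.2 < u.2) ∨ (v.1 < u.1 ∧ u.2 < v.2)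
  nL : ∀ u ∈ L, ∀ v ∈ L, u ≠ v → (u.1 < v.1 ∧ v.2 < u.2) ∨ (v.1 < u.1 ∧ u.2 < v.2)
  nUL : ∀ u ∈ U, ∀ v ∈ L, u.1 < v.2 ∧ v.1 < u.2
  bU : ∀ u ∈ U, (u.2 : ℕ) < j
  bL1 : ∀ u ∈ L, (u.1 : ℕ) < j
  bL2 : ∀ u ∈ L, (u.2 : ℕ) < i

section
variable {K : Type*} [Field K] {n : ℕ}

def arcTau (k : ℕ) : Equiv.Perm (Fin (k * 2)) :=
  finProdFinEquiv.permCongr (Equiv.prodCongr (Equiv.refl (Fin k)) (Equiv.swap (0 : Fin 2) 1))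

theorem arcTau_isMat (k : ℕ) : IsMat (arcTau k) := by
  constructor
  · intro i h
    obtain ⟨⟨a, b⟩, rfl⟩ := finProdFinEquiv.surjective i
    simp only [arcTau, Equiv.permCongr_apply, Equiv.symm_apply_apply, EmbeddingLike.apply_eq_iff_eq] at h
    fin_cases b <;> simp at h
  · intro i
    obtain ⟨⟨a, b⟩, rfl⟩ := finProdFinEquiv.surjective i
    simp [arcTau, Equiv.permCongr_apply]

theorem arcTau_zero (k : ℕ) (t : Fin k) : arcTau k (finProdFinEquiv (t, 0)) = finProdFinEquiv (t, 1) := by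
  simp [arcTau, Equiv.permCongr_apply]

theorem arcTau_one (k : ℕ) (t : Fin k) : arcTau k (finProdFinEquiv (t, 1)) = finProdFinEquiv (t, 0) := by
  simp [arcTau, Equiv.permCongr_apply]

theorem vert_cases {k : ℕ} (s : Fin (k * 2)) :
    ∃ t, s = finProdFinEquiv (t, 0) ∨ s = finProdFinEquiv (t, 1) := by
  obtain ⟨⟨a, b⟩, rfl⟩ := finProdFinEquiv.surjective s
  refine ⟨a, ?_⟩
  fin_cases b <;> simp

theorem later_arc (U L : Finset (Fin n × Fin n)) (i j : ℕ) (hc : Cfg U L i j)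
    (hNC : ∀ u ∈ U, ∀ v ∈ L, u ≠ v → ¬ (v.1 ≤ u.1 ∧ v.2 ≤ u.2)) (a b : Fin n × Fin n)
    (ha : a ∈ U ∨ a ∈ L) (hb : b ∈ U ∨ b ∈ L) (hne : a ≠ b)
    (h1 : b.2 ≤ a.2) (h2 : b.2 = a.2 → a ∉ U → b ∉ U) :
    b.1 ≤ a.2 ∧ b.2 ≤ a.2 ∧ (b ∈ L → a.1 < b.1 ∧ b.1 < a.2) ∧ (b ∈ U → a.1 < b.2 ∧ b.2 < a.2) ∧
    (a ∈ U → a.1 < b.1 ∧ a.1 < b.2) ∧ (a ∈ L → b.1 < a.2 ∧ b.2 < a.2) := by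
  have l1 : a.1 < a.2 := ha.elim (hc.hU _) (hc.hL _)
  have l2 : b.1 < b.2 := hb.elim (hc.hU _) (hc.hL _)
  have bU := fun h h' => hc.nU a h b h' hne
  have bL := fun h h' => hc.nL a h b h' hne
  have f3 := fun h h' => hNC a h b h' hne
  have f4 := fun h h' => hc.nUL a h b h'
  have f5 := fun h h' => hc.nUL b h a h'
  rw [Fin.lt_def] at l1 l2
  rw [Fin.le_def] at h1
  rw [Fin.ext_iff] at h2
  simp only [Fin.lt_def, Fin.le_def] at *
  clear hNC hc hne
  by_cases aU : a ∈ U <;> by_cases aL : a ∈ L <;> by_cases bU' : b ∈ U <;> by_cases bL' : b ∈ L <;>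
    simp only [aU, aL, bU', bL', true_or, or_true, or_self, not_true, not_false_eq_true,
      forall_true_left, true_and, and_true, IsEmpty.forall_iff, imp_false, forall_const] at * <;> omega

theorem cfg_good (U L : Finset (Fin n × Fin n)) (i j : ℕ) (hji : j ≤ i) (hi : i ≤ n) (hc : Cfg U L i j)
    (hNC : ∀ u ∈ U, ∀ v ∈ L, u ≠ v → ¬ (v.1 ≤ u.1 ∧ v.2 ≤ u.2))
    (r : ℕ → ℕ → ℕ) (hr : r i j < U.card + L.card)
    (m : SSVar n →₀ ℕ) (hm : ∀ u, (u ∈ U ∨ u ∈ L) → ∀ h : u.1 < u.2, m ⟨(u.2, u.1), h⟩ ≠ 0) :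
    ∃ g ∈ IR K n r, Low (wt m) (g - MvPolynomial.monomial m 1) := by
  classical
  obtain ⟨k, e, hkn, hij, heE, hsurj⟩ : ∃ (k : ℕ) (e : Fin k → Fin n × Fin n), k ≤ n ^ 2 ∧
      Function.Injective e ∧ (∀ t, e t ∈ U ∨ e t ∈ L) ∧ (∀ a, a ∈ U ∨ a ∈ L → ∃ t, e t = a) := by
    refine ⟨(U ∪ L).card, fun t => ((U ∪ L).equivFin.symm t).1, ?_, ?_, ?_, ?_⟩
    · have := Finset.card_le_univ (U ∪ L)
      simp at this; rw [pow_two]; exact this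
    · intro a b h; exact (U ∪ L).equivFin.symm.injective (Subtype.ext h)
    · intro t; exact Finset.mem_union.1 ((U ∪ L).equivFin.symm t).2
    · intro a h
      exact ⟨(U ∪ L).equivFin ⟨a, Finset.mem_union.2 h⟩, by simp⟩
  obtain ⟨lab, lab0, lab1⟩ : ∃ lab : Fin (k * 2) → Fin n,
      (∀ t, lab (finProdFinEquiv (t, 0)) = (e t).1) ∧ (∀ t, lab (finProdFinEquiv (t, 1)) = (e t).2) :=
    ⟨fun s => if (finProdFinEquiv.symm s).2 = 0 then (e (finProdFinEquiv.symm s).1).1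
      else (e (finProdFinEquiv.symm s).1).2, fun t => by simp only [Equiv.symm_apply_apply]; simp,
      fun t => by simp only [Equiv.symm_apply_apply]; simp⟩
  obtain ⟨isA, isA0, isA1⟩ : ∃ isA : Fin (k * 2) → Prop,
      (∀ t, isA (finProdFinEquiv (t, 0)) ↔ e t ∉ L) ∧ (∀ t, isA (finProdFinEquiv (t, 1)) ↔ e t ∉ U) :=
    ⟨fun s => if (finProdFinEquiv.symm s).2 = 0 then (e (finProdFinEquiv.symm s).1) ∉ L
      else (e (finProdFinEquiv.symm s).1) ∉ U, fun t => by simp only [Equiv.symm_apply_apply]; simp,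
      fun t => by simp only [Equiv.symm_apply_apply]; simp⟩
  obtain ⟨ρ, hρe⟩ : ∃ ρ : Fin (k * 2) → ℕ, ∀ t b, ρ (finProdFinEquiv (t, b)) = 
      2 * (n - (e t).2) + if e t ∈ U then 0 else 1 :=
    ⟨fun s => 2 * (n - (e (finProdFinEquiv.symm s).1).2) + if e (finProdFinEquiv.symm s).1 ∈ U then 0 else 1,
      fun t b => by simp only [Equiv.symm_apply_apply]⟩
  have hlt : ∀ t, (e t).1 < (e t).2 := fun t => (heE t).elim (hc.hU _) (hc.hL _)
  have hN : k * 2 < Bb n := by unfold Bb; omega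
  let v : Fin (k * 2) → SSVar n := fun s =>
    ⟨((e (finProdFinEquiv.symm s).1).2, (e (finProdFinEquiv.symm s).1).1), hlt _⟩
  -- vertex facts
  have later : ∀ t t', t ≠ t' →
      2 * (n - (e t).2) + (if e t ∈ U then 0 else 1) ≤ 2 * (n - (e t').2) + (if e t' ∈ U then 0 else 1) →
      ∀ P, (P = finProdFinEquiv (t', 0) ∨ P = finProdFinEquiv (t', 1)) →
      (lab P ≤ (e t).2) ∧ (¬ isA P → (e t).1 < lab P ∧ lab P < (e t).2) ∧
      (e t ∈ U → (e t).1 < lab P) ∧ (e t ∈ L → lab P < (e t).2) := by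
    intro t t' htt hle P hP
    have hne : e t ≠ e t' := fun h => htt (hij h)
    have h1 : (e t').2 ≤ (e t).2 := by
      have := (e t).2.2; have := (e t').2.2
      rw [Fin.le_def]; split_ifs at hle <;> omega
    have h2 : (e t').2 = (e t).2 → e t ∉ U → e t' ∉ U := by
      intro h h' h''
      rw [h, if_neg h', if_pos h''] at hle; omega
    have := later_arc U L i j hc hNC (e t) (e t') (heE t) (heE t') hne h1 h2
    rcases hP with rfl | rfl
    · rw [lab0, isA0, not_not]
      obtain ⟨a1, a2, a3, a4, a5, a6⟩ := this
      exact ⟨a1, a3, fun h => (a5 h).1, fun h => (a6 h).1⟩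
    · rw [lab1, isA1, not_not]
      obtain ⟨a1, a2, a3, a4, a5, a6⟩ := this
      exact ⟨a2, a4, fun h => (a5 h).2, fun h => (a6 h).2⟩
  have cmp : ∀ t P Q, (P = finProdFinEquiv (t, 0) ∨ P = finProdFinEquiv (t, 1)) →
      (lab Q ≤ (e t).2) ∧ (¬ isA Q → (e t).1 < lab Q ∧ lab Q < (e t).2) ∧
      (e t ∈ U → (e t).1 < lab Q) ∧ (e t ∈ L → lab Q < (e t).2) → ¬ (isA P ∧ isA Q) →
      eP n (lab P) (lab Q) < eP n (e t).1 (e t).2 := by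
    intro t P Q hP ⟨q1, q2, q3, q4⟩ hA
    apply eP_lt' n _ _ _ _ (hlt t)
    have hl := hlt t
    have h3 := heE t
    rcases hP with rfl | rfl
    · rw [isA0] at hA
      rw [lab0]
      left; refine ⟨hl, ?_⟩
      by_cases hh : e t ∈ L
      · exact q4 hh
      · exact (q2 fun h' => hA ⟨hh, h'⟩).2
    · rw [isA1] at hA
      rw [lab1]
      right; refine ⟨le_rfl, q1, hl, ?_⟩
      by_cases hh : e t ∈ U
      · exact q3 hh
      · exact (q2 fun h' => hA ⟨hh, h'⟩).1
  have hyp : ∀ s P Q, ρ s ≤ ρ P → ρ s ≤ ρ Q → ¬ (P = s ∧ Q = arcTau k s) → ¬ (P = arcTau k s ∧ Q = s) → P ≠ Q →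
      ¬ (isA P ∧ isA Q) → lab P ≠ lab Q → eP n (lab P) (lab Q) < eP n (lab s) (lab (arcTau k s)) := by
    intro s P Q hsP hsQ h1 h2 hPQ hA _
    obtain ⟨t, ht⟩ := vert_cases s
    obtain ⟨tP, htP⟩ := vert_cases P
    obtain ⟨tQ, htQ⟩ := vert_cases Q
    have hes : eP n (lab s) (lab (arcTau k s)) = eP n (e t).1 (e t).2 := by
      rcases ht with rfl | rfl
      · rw [arcTau_zero, lab0, lab1]
      · rw [arcTau_one, lab0, lab1, eP_comm]
    have rs : ρ s = 2 * (n - (e t).2) + if e t ∈ U then 0 else 1 := by rcases ht with rfl | rfl <;> exact hρe _ _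
    have rP : ρ P = 2 * (n - (e tP).2) + if e tP ∈ U then 0 else 1 := by rcases htP with rfl | rfl <;> exact hρe _ _
    have rQ : ρ Q = 2 * (n - (e tQ).2) + if e tQ ∈ U then 0 else 1 := by rcases htQ with rfl | rfl <;> exact hρe _ _
    rw [hes]
    rw [rs, rP] at hsP
    rw [rs, rQ] at hsQ
    by_cases hP : t = tP
    · subst hP
      have hQ : t ≠ tQ := by
        rintro rfl
        rcases ht with rfl | rfl <;> rcases htP with rfl | rfl <;> rcases htQ with rfl | rfl <;>
          simp [arcTau_zero, arcTau_one] at h1 h2 hPQ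
      exact cmp t P Q htP (later t tQ hQ hsQ Q htQ) hA
    · by_cases hQ : t = tQ
      · subst hQ
        rw [eP_comm]
        exact cmp t Q P htQ (later t tP hP hsP P htP) (fun h => hA h.symm)
      · have fP := later t tP hP hsP P htP
        have fQ := later t tQ hQ hsQ Q htQ
        apply eP_lt' n _ _ _ _ (hlt t)
        rcases heE t with hh | hh
        · exact Or.inr ⟨fP.1, fQ.1, fP.2.2.1 hh, fQ.2.2.1 hh⟩
        · exact Or.inl ⟨fP.2.2.2 hh, fQ.2.2.2 hh⟩
  have hvc : ∀ i, max (lab (arcTau k i)) (lab i) = (e (finProdFinEquiv.symm i).1).2 ∧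
      min (lab (arcTau k i)) (lab i) = (e (finProdFinEquiv.symm i).1).1 := by
    intro s
    obtain ⟨t, rfl | rfl⟩ := vert_cases s
    · rw [arcTau_zero, lab0, lab1, Equiv.symm_apply_apply]
      exact ⟨max_eq_left (hlt t).le, min_eq_right (hlt t).le⟩
    · rw [arcTau_one, lab0, lab1, Equiv.symm_apply_apply]
      exact ⟨max_eq_right (hlt t).le, min_eq_left (hlt t).le⟩
  have hA : ∀ i, ¬ (isA i ∧ isA (arcTau k i)) ∧ lab i ≠ lab (arcTau k i) := by
    intro s
    obtain ⟨t, rfl | rfl⟩ := vert_cases s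
    · rw [arcTau_zero, lab0, lab1, isA0, isA1]
      have := heE t
      exact ⟨by tauto, (hlt t).ne⟩
    · rw [arcTau_one, lab0, lab1, isA0, isA1]
      have := heE t
      exact ⟨by tauto, (hlt t).ne'⟩
  have hm0 : ∑ i ∈ Finset.univ.filter (fun i => arcTau k i < i), Finsupp.single (v i) 1 ≤ m := by
    intro d
    rw [Finsupp.finset_sum_apply]
    simp only [Finsupp.single_apply]
    rw [Finset.sum_boole]
    by_cases hd : (({i ∈ Finset.univ.filter (fun i => arcTau k i < i) | v i = d}).card : ℕ) = 0
    · simp only [Nat.cast_id]; omega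
    · have h1 : ({i ∈ Finset.univ.filter (fun i => arcTau k i < i) | v i = d}).card ≤ 1 := by
        rw [Finset.card_le_one]
        intro a ha b hb
        rw [Finset.mem_filter, Finset.mem_filter] at ha hb
        have hab : v a = v b := by rw [ha.2, hb.2]
        have h3 : (finProdFinEquiv.symm a).1 = (finProdFinEquiv.symm b).1 := by
          apply hij
          simp only [v, Subtype.mk.injEq, Prod.mk.injEq] at hab
          exact Prod.ext hab.2 hab.1
        obtain ⟨t, hta⟩ := vert_cases a
        obtain ⟨t', htb⟩ := vert_cases b
        have h4 : t = t' := by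
          rcases hta with rfl | rfl <;> rcases htb with rfl | rfl <;> simpa using h3
        subst h4
        have ha2 := ha.1.2
        have hb2 := hb.1.2
        rcases hta with rfl | rfl <;> rcases htb with rfl | rfl <;> try rfl
        · rw [arcTau_zero] at ha2; rw [arcTau_one] at hb2; exact absurd ha2 (not_lt.2 hb2.le)
        · rw [arcTau_one] at ha2; rw [arcTau_zero] at hb2; exact absurd ha2 (not_lt.2 hb2.le)
      have h2 : m d ≠ 0 := by
        obtain ⟨a, ha⟩ := Finset.card_pos.1 (Nat.pos_of_ne_zero hd)
        rw [Finset.mem_filter] at ha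
        rw [← ha.2]
        exact hm _ (heE _) _
      simp only [Nat.cast_id]; omega
  obtain ⟨q, hq⟩ := lead (K := K) hN lab isA (arcTau k) (arcTau_isMat k) ρ (by
    intro s
    obtain ⟨t, rfl | rfl⟩ := vert_cases s
    · rw [arcTau_zero, hρe, hρe]
    · rw [arcTau_one, hρe, hρe]) hyp v (fun i _ => ⟨(hvc i).1.symm, (hvc i).2.symm⟩) hA m hm0
  refine ⟨_, Ideal.mul_mem_left _ q ?_, hq⟩
  have hj : 1 ≤ j := by
    rcases Nat.eq_zero_or_pos j with h | h
    · exfalso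
      have hU : U = ∅ := by
        rw [Finset.eq_empty_iff_forall_notMem]; intro u hu; have := hc.bU u hu; omega
      have hL : L = ∅ := by
        rw [Finset.eq_empty_iff_forall_notMem]; intro u hu; have := hc.bL1 u hu; omega
      rw [hU, hL] at hr; simp at hr
    · exact h
  refine mem_IR r i j hj hji hi (k * 2) (by simp) (Hmat K lab isA) ?_ lab isA ?_ ?_ ?_ ?_ ?_
  · constructor
    · intro a; simp only [Hmat, Matrix.of_apply]; split_ifs
      · rfl
      · exact (Uss_alt K n).1 _
    · intro a b; simp only [Hmat, Matrix.of_apply]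
      simp only [and_comm (a := isA b)]
      split_ifs
      · exact neg_zero.symm
      · exact (Uss_alt K n).2 _ _
  · intro s t h; simp only [Hmat, Matrix.of_apply]; rw [if_neg h]
  · intro s
    obtain ⟨t, h⟩ := vert_cases s
    have h1 : lab s ≤ (e t).2 := by
      rcases h with rfl | rfl
      · rw [lab0]; exact (hlt t).le
      · rw [lab1]
    rw [Fin.le_def] at h1
    rcases heE t with h2 | h2
    · have := hc.bU _ h2; omega
    · have := hc.bL2 _ h2; omega
  · intro s t hs ht hst
    obtain ⟨s, rfl | rfl⟩ := vert_cases s <;> obtain ⟨t, rfl | rfl⟩ := vert_cases t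
    · rw [isA0, not_not] at hs ht
      rw [lab0, lab0] at hst
      by_contra h
      have hne : e s ≠ e t := fun h' => h (by rw [hij h'])
      have := hc.nL _ hs _ ht hne
      rw [hst] at this; simp at this
    · rw [isA0, not_not] at hs; rw [isA1, not_not] at ht
      rw [lab0, lab1] at hst
      have := (hc.nUL _ ht _ hs).2
      rw [hst] at this; simp at this
    · rw [isA1, not_not] at hs; rw [isA0, not_not] at ht
      rw [lab0, lab1] at hst
      have := (hc.nUL _ hs _ ht).2
      rw [hst] at this; simp at this
    · rw [isA1, not_not] at hs ht
      rw [lab1, lab1] at hst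
      by_contra h
      have hne : e s ≠ e t := fun h' => h (by rw [hij h'])
      have := hc.nU _ hs _ ht hne
      rw [hst] at this; simp at this
  · intro s hs
    obtain ⟨s, rfl | rfl⟩ := vert_cases s
    · rw [isA0, not_not] at hs; rw [lab0]; exact hc.bL1 _ hs
    · rw [isA1, not_not] at hs; rw [lab1]; exact hc.bU _ hs
  · refine lt_of_lt_of_le hr ?_
    rw [← Finset.card_disjSum]
    have hch : ∀ x : (Fin n × Fin n) ⊕ (Fin n × Fin n), x ∈ U.disjSum L → ∃ s : Fin (k * 2), ¬ isA s ∧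
        ((∃ t, s = finProdFinEquiv (t, 1) ∧ x = Sum.inl (e t)) ∨ (∃ t, s = finProdFinEquiv (t, 0) ∧ x = Sum.inr (e t))) := by
      rintro (x | x) hx
      · rw [Finset.inl_mem_disjSum] at hx
        obtain ⟨t, rfl⟩ := hsurj x (Or.inl hx)
        exact ⟨finProdFinEquiv (t, 1), by rw [isA1, not_not]; exact hx, Or.inl ⟨t, rfl, rfl⟩⟩
      · rw [Finset.inr_mem_disjSum] at hx
        obtain ⟨t, rfl⟩ := hsurj x (Or.inr hx)
        exact ⟨finProdFinEquiv (t, 0), by rw [isA0, not_not]; exact hx, Or.inr ⟨t, rfl, rfl⟩⟩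
    choose f hf1 hf2 using hch
    rw [← Finset.card_attach]
    apply Finset.card_le_card_of_injOn (fun x => f x.1 x.2)
    · intro x hx
      have := hf1 x.1 x.2
      simpa using this
    · intro x hx y hy hxy
      have h1 := hf2 x.1 x.2
      have h2 := hf2 y.1 y.2
      beta_reduce at hxy
      rw [← hxy] at h2
      apply Subtype.ext
      rcases h1 with ⟨t, h1, h1'⟩ | ⟨t, h1, h1'⟩ <;> rcases h2 with ⟨t', h2, h2'⟩ | ⟨t', h2, h2'⟩ <;>
        rw [h1] at h2 <;> simp at h2 <;> rw [h1', h2', h2]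

end
end

section

theorem cfg_norm {n : ℕ} (U L : Finset (Fin n × Fin n)) (i j : ℕ) (hji : j ≤ i) (hc : Cfg U L i j) :
    ∃ U' L', Cfg U' L' i j ∧ (∀ u ∈ U', ∀ v ∈ L', u ≠ v → ¬ (v.1 ≤ u.1 ∧ v.2 ≤ u.2)) ∧
      U.card + L.card ≤ U'.card + L'.card ∧ ∀ u, u ∈ U' ∨ u ∈ L' → u ∈ U ∨ u ∈ L := by
  classical
  by_cases hbad : ∃ u ∈ U, ∃ v ∈ L, u ≠ v ∧ (v.1 ≤ u.1 ∧ v.2 ≤ u.2)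
  swap
  · push Not at hbad
    refine ⟨U, L, hc, ?_, le_rfl, fun _ h => h⟩
    intro u hu v hv h h'
    exact absurd (hbad u hu v hv h h'.1) (not_lt.2 h'.2)
  have hne : (U.filter fun u => ∃ v ∈ L, u ≠ v ∧ (v.1 ≤ u.1 ∧ v.2 ≤ u.2)).Nonempty := by
    obtain ⟨u, hu, h⟩ := hbad
    exact ⟨u, Finset.mem_filter.2 ⟨hu, h⟩⟩
  obtain ⟨u, hu, humax⟩ := Finset.exists_max_image _ (fun u => u.2) hne
  rw [Finset.mem_filter] at hu
  obtain ⟨hu, hub⟩ := hu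
  have hne2 : (L.filter fun v => u ≠ v ∧ (v.1 ≤ u.1 ∧ v.2 ≤ u.2)).Nonempty := by
    obtain ⟨v, hv, h⟩ := hub
    exact ⟨v, Finset.mem_filter.2 ⟨hv, h⟩⟩
  obtain ⟨v, hv, hvmax⟩ := Finset.exists_max_image _ (fun v => v.2) hne2
  rw [Finset.mem_filter] at hv
  obtain ⟨hv, huv, hv1, hv2⟩ := hv
  have hum : ∀ u' ∈ U, u.2 < u'.2 → ∀ v' ∈ L, u' ≠ v' → ¬ (v'.1 ≤ u'.1 ∧ v'.2 ≤ u'.2) := by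
    intro u' hu' h v' hv' h1 h2
    exact absurd (humax u' (Finset.mem_filter.2 ⟨hu', v', hv', h1, h2⟩)) (not_le.2 h)
  have hvm : ∀ v' ∈ L, v.2 < v'.2 → u ≠ v' → ¬ (v'.1 ≤ u.1 ∧ v'.2 ≤ u.2) := by
    intro v' hv' h h1 h2
    exact absurd (hvmax v' (Finset.mem_filter.2 ⟨hv', h1, h2⟩)) (not_le.2 h)
  have hb := hc.bU
  have hb1 := hc.bL1
  have hb2 := hc.bL2
  have hU := hc.hU
  have hL := hc.hL
  -- nested facts
  have nestU : ∀ a ∈ U, ∀ b ∈ U, (a.2 < b.2 → b.1 < a.1) ∧ (a.2 ≤ b.2 → b.1 ≤ a.1) := by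
    intro a ha b hb
    by_cases h : a = b
    · subst h; exact ⟨fun h => absurd h (lt_irrefl _), fun _ => le_rfl⟩
    · have := hc.nU a ha b hb h
      simp only [Fin.lt_def, Fin.le_def] at *; omega
  have nestL : ∀ a ∈ L, ∀ b ∈ L, (a.2 < b.2 → b.1 < a.1) ∧ (a.2 ≤ b.2 → b.1 ≤ a.1) := by
    intro a ha b hb
    by_cases h : a = b
    · subst h; exact ⟨fun h => absurd h (lt_irrefl _), fun _ => le_rfl⟩
    · have := hc.nL a ha b hb h
      simp only [Fin.lt_def, Fin.le_def] at *; omega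
  have spU := Finset.card_filter_add_card_filter_not (s := U) (fun a => a.2 ≤ u.2)
  have spL := Finset.card_filter_add_card_filter_not (s := L) (fun a => a.2 ≤ v.2)
  -- separation
  have sepL : ∀ a ∈ U, a.2 ≤ u.2 → ∀ b ∈ L, v.2 < b.2 → b.1 < a.1 ∧ a.2 < b.2 ∧ u.2 < b.2 := by
    intro a ha h1 b hb h2
    have e1 := (nestU a ha u hu).2 h1
    have e2 := (nestL v hv b hb).1 h2
    have hbu : b.1 < u.1 := lt_of_lt_of_le e2 hv1
    have := hvm b hb h2 (by rintro rfl; exact lt_irrefl _ hbu)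
    have h3 : u.2 < b.2 := by by_contra h; exact this ⟨hbu.le, not_lt.1 h⟩
    exact ⟨hbu.trans_le e1, h1.trans_lt h3, h3⟩
  have sepU : ∀ a ∈ L, a.2 ≤ v.2 → ∀ b ∈ U, u.2 < b.2 → b.1 < a.1 ∧ a.2 < b.2 := by
    intro a ha h1 b hb h2
    have e1 := (nestL a ha v hv).2 h1
    have h3 : v.2 < b.2 := hv2.trans_lt h2
    have := hum b hb h2 v hv (by rintro rfl; exact lt_irrefl _ h3)
    have h4 : b.1 < v.1 := by by_contra h; exact this ⟨not_lt.1 h, h3.le⟩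
    exact ⟨h4.trans_le e1, h1.trans_lt h3⟩
  by_cases hpq : (L.filter fun a => a.2 ≤ v.2).card ≤ (U.filter fun a => a.2 ≤ u.2).card
  · refine ⟨U, (U.filter fun a => a.2 ≤ u.2) ∪ (L.filter fun a => ¬ a.2 ≤ v.2), ?_, ?_, ?_, ?_⟩
    · have hmem : ∀ a, a ∈ (U.filter fun a => a.2 ≤ u.2) ∪ (L.filter fun a => ¬ a.2 ≤ v.2) ↔
        (a ∈ U ∧ a.2 ≤ u.2) ∨ (a ∈ L ∧ v.2 < a.2) := by
        intro a; rw [Finset.mem_union, Finset.mem_filter, Finset.mem_filter, not_le]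
      refine ⟨hU, ?_, hc.nU, ?_, ?_, hb, ?_, ?_⟩
      · intro a ha; rw [hmem] at ha
        rcases ha with ha | ha
        · exact hU a ha.1
        · exact hL a ha.1
      · intro a ha b hb hab; rw [hmem] at ha hb
        rcases ha with ha | ha <;> rcases hb with hb | hb
        · exact hc.nU a ha.1 b hb.1 hab
        · have := sepL a ha.1 ha.2 b hb.1 hb.2
          exact Or.inr ⟨this.1, this.2.1⟩
        · have := sepL b hb.1 hb.2 a ha.1 ha.2
          exact Or.inl ⟨this.1, this.2.1⟩
        · exact hc.nL a ha.1 b hb.1 hab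
      · intro a ha b hb; rw [hmem] at hb
        rcases hb with hb | hb
        · have h1 := hU a ha
          have h2 := hU b hb.1
          by_cases hab : a = b
          · subst hab; exact ⟨h1, h1⟩
          · have := hc.nU a ha b hb.1 hab
            simp only [Fin.lt_def] at *; omega
        · exact hc.nUL a ha b hb.1
      · intro a ha; rw [hmem] at ha
        rcases ha with ha | ha
        · have := hb a ha.1; have := hU a ha.1
          simp only [Fin.lt_def] at this; omega
        · exact hb1 a ha.1
      · intro a ha; rw [hmem] at ha
        rcases ha with ha | ha
        · have := hb a ha.1; omega
        · exact hb2 a ha.1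
    · intro a ha b hb hab h
      rw [Finset.mem_union, Finset.mem_filter, Finset.mem_filter, not_le] at hb
      rcases hb with hb | hb
      · have := hc.nU a ha b hb.1 hab
        simp only [Fin.lt_def, Fin.le_def] at *; omega
      · have h1 := (sepL u hu le_rfl b hb.1 hb.2).2.2
        exact hum a ha (h1.trans_le h.2) b hb.1 hab h
    · rw [Finset.card_union_of_disjoint]
      · omega
      · rw [Finset.disjoint_left]
        intro a ha hb
        rw [Finset.mem_filter] at ha hb
        have := (sepL a ha.1 ha.2 a hb.1 (not_le.1 hb.2)).1
        exact lt_irrefl _ this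
    · intro a ha
      rw [Finset.mem_union, Finset.mem_filter, Finset.mem_filter] at ha
      tauto
  · refine ⟨(L.filter fun a => a.2 ≤ v.2) ∪ (U.filter fun a => ¬ a.2 ≤ u.2), L, ?_, ?_, ?_, ?_⟩
    · have hmem : ∀ a, a ∈ (L.filter fun a => a.2 ≤ v.2) ∪ (U.filter fun a => ¬ a.2 ≤ u.2) ↔
        (a ∈ L ∧ a.2 ≤ v.2) ∨ (a ∈ U ∧ u.2 < a.2) := by
        intro a; rw [Finset.mem_union, Finset.mem_filter, Finset.mem_filter, not_le]
      refine ⟨?_, hL, ?_, hc.nL, ?_, ?_, hb1, hb2⟩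
      · intro a ha; rw [hmem] at ha
        rcases ha with ha | ha
        · exact hL a ha.1
        · exact hU a ha.1
      · intro a ha b hb hab; rw [hmem] at ha hb
        rcases ha with ha | ha <;> rcases hb with hb | hb
        · exact hc.nL a ha.1 b hb.1 hab
        · have := sepU a ha.1 ha.2 b hb.1 hb.2
          exact Or.inr ⟨this.1, this.2⟩
        · have := sepU b hb.1 hb.2 a ha.1 ha.2
          exact Or.inl ⟨this.1, this.2⟩
        · exact hc.nU a ha.1 b hb.1 hab
      · intro a ha b hb; rw [hmem] at ha
        rcases ha with ha | ha
        · have h1 := hL b hb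
          have h2 := hL a ha.1
          by_cases hab : a = b
          · subst hab; exact ⟨h1, h1⟩
          · have := hc.nL a ha.1 b hb hab
            simp only [Fin.lt_def] at *; omega
        · exact hc.nUL a ha.1 b hb
      · intro a ha; rw [hmem] at ha
        rcases ha with ha | ha
        · have := hb u hu; have h2 := ha.2.trans hv2
          rw [Fin.le_def] at h2; omega
        · exact hb a ha.1
    · intro a ha b hb hab h
      rw [Finset.mem_union, Finset.mem_filter, Finset.mem_filter, not_le] at ha
      rcases ha with ha | ha
      · have := hc.nL a ha.1 b hb hab
        simp only [Fin.lt_def, Fin.le_def] at *; omega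
      · exact hum a ha.1 ha.2 b hb hab h
    · rw [Finset.card_union_of_disjoint]
      · omega
      · rw [Finset.disjoint_left]
        intro a ha hb
        rw [Finset.mem_filter] at ha hb
        have := (sepU a ha.1 ha.2 a hb.1 (not_le.1 hb.2)).1
        exact lt_irrefl _ this
    · intro a ha
      rw [Finset.mem_union, Finset.mem_filter, Finset.mem_filter] at ha
      tauto

def SM {n : ℕ} (m : SSVar n →₀ ℕ) (a b : ℕ) : Prop :=
  ∃ v : SSVar n, m v ≠ 0 ∧ (((v.1.1 : ℕ) = a ∧ (v.1.2 : ℕ) = b) ∨ ((v.1.1 : ℕ) = b ∧ (v.1.2 : ℕ) = a))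

def Chain (T : Finset (ℕ × ℕ)) : Prop :=
  ∀ e ∈ T, ∀ e' ∈ T, e ≠ e' → (e.1 < e'.1 ∧ e'.2 < e.2) ∨ (e'.1 < e.1 ∧ e.2 < e'.2)

def Std (n : ℕ) (S : ℕ → ℕ → Prop) (r : ℕ → ℕ → ℕ) : Prop :=
  ∀ i j, i ≤ n → j ≤ n → ∀ T, Chain T → (∀ e ∈ T, S e.1 e.2 ∧ e.1 < i ∧ e.2 < j) → T.card ≤ r i j

theorem SM.symm {n : ℕ} {m : SSVar n →₀ ℕ} {a b : ℕ} (h : SM m a b) : SM m b a := by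
  obtain ⟨v, h, h'⟩ := h
  exact ⟨v, h, h'.symm⟩

theorem SM.ne {n : ℕ} {m : SSVar n →₀ ℕ} {a b : ℕ} (h : SM m a b) : a ≠ b := by
  obtain ⟨v, h, h'⟩ := h
  have := v.2
  rw [Fin.lt_def] at this
  omega

section
variable {K : Type*} [Field K] {n : ℕ}

theorem red_of_chain (r : ℕ → ℕ → ℕ) (m : SSVar n →₀ ℕ) (i j : ℕ) (hji : j ≤ i) (hi : i ≤ n)
    (T : Finset (ℕ × ℕ)) (hT : Chain T) (hTS : ∀ e ∈ T, SM m e.1 e.2 ∧ e.1 < i ∧ e.2 < j)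
    (hr : r i j < T.card) :
    ∃ g ∈ IR K n r, Low (wt m) (g - MvPolynomial.monomial m 1) := by
  classical
  let U : Finset (Fin n × Fin n) := Finset.univ.filter fun p => p.1 < p.2 ∧ ((p.1 : ℕ), (p.2 : ℕ)) ∈ T
  let L : Finset (Fin n × Fin n) := Finset.univ.filter fun p => p.1 < p.2 ∧ ((p.2 : ℕ), (p.1 : ℕ)) ∈ T
  have mU : ∀ p, p ∈ U ↔ p.1 < p.2 ∧ ((p.1 : ℕ), (p.2 : ℕ)) ∈ T := by
    intro p; simp only [U]; rw [Finset.mem_filter]; simp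
  have mL : ∀ p, p ∈ L ↔ p.1 < p.2 ∧ ((p.2 : ℕ), (p.1 : ℕ)) ∈ T := by
    intro p; simp only [L]; rw [Finset.mem_filter]; simp
  have hc : Cfg U L i j := by
    refine ⟨?_, ?_, ?_, ?_, ?_, ?_, ?_, ?_⟩
    · intro u hu; exact ((mU u).1 hu).1
    · intro u hu; exact ((mL u).1 hu).1
    · intro u hu v hv huv
      rw [mU] at hu hv
      have := hT _ hu.2 _ hv.2 (by
        intro h; apply huv; simp only [Prod.mk.injEq] at h; exact Prod.ext (Fin.ext h.1) (Fin.ext h.2))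
      simp only [Fin.lt_def] at *; omega
    · intro u hu v hv huv
      rw [mL] at hu hv
      have := hT _ hu.2 _ hv.2 (by
        intro h; apply huv; simp only [Prod.mk.injEq] at h; exact Prod.ext (Fin.ext h.2) (Fin.ext h.1))
      simp only [Fin.lt_def] at *; omega
    · intro u hu v hv
      rw [mU] at hu; rw [mL] at hv
      have := hT _ hu.2 _ hv.2 (by
        intro h; simp only [Prod.mk.injEq] at h
        have h1 := hu.1; have h2 := hv.1
        rw [Fin.lt_def] at h1 h2; omega)
      simp only [Fin.lt_def] at *; omega
    · intro u hu; exact (hTS _ ((mU u).1 hu).2).2.2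
    · intro u hu; exact (hTS _ ((mL u).1 hu).2).2.2
    · intro u hu; exact (hTS _ ((mL u).1 hu).2).2.1
  have hcard : T.card ≤ U.card + L.card := by
    have : T ⊆ U.image (fun p => ((p.1 : ℕ), (p.2 : ℕ))) ∪ L.image (fun p => ((p.2 : ℕ), (p.1 : ℕ))) := by
      rintro ⟨a, b⟩ he
      obtain ⟨h1, h2, h3⟩ := hTS _ he
      simp only at h1 h2 h3
      rw [Finset.mem_union, Finset.mem_image, Finset.mem_image]
      rcases lt_or_gt_of_ne h1.ne with h | h
      · left
        refine ⟨(⟨a, by omega⟩, ⟨b, by omega⟩), ?_, rfl⟩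
        rw [mU]; exact ⟨h, he⟩
      · right
        refine ⟨(⟨b, by omega⟩, ⟨a, by omega⟩), ?_, rfl⟩
        rw [mL]; exact ⟨h, he⟩
    refine (Finset.card_le_card this).trans ((Finset.card_union_le _ _).trans ?_)
    exact add_le_add Finset.card_image_le Finset.card_image_le
  obtain ⟨U', L', hc', hNC, hcard', hsub⟩ := cfg_norm U L i j hji hc
  apply cfg_good U' L' i j hji hi hc' hNC r (by omega) m
  intro u hu h
  have hS : SM m u.1 u.2 := by
    rcases hsub u hu with h | h
    · exact (hTS _ ((mU u).1 h).2).1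
    · exact (hTS _ ((mL u).1 h).2).1.symm
  obtain ⟨v, hv, hv'⟩ := hS
  have h2 := v.2
  rw [Fin.lt_def] at h2 h
  have : v = ⟨(u.2, u.1), h⟩ := by
    apply Subtype.ext
    apply Prod.ext <;> apply Fin.ext <;> simp <;> omega
  rw [← this]; exact hv

theorem red_mono (r : ℕ → ℕ → ℕ) (hsym : ∀ i j, r i j = r j i) (m : SSVar n →₀ ℕ)
    (h : ¬ Std n (SM m) r) :
    ∃ g ∈ IR K n r, Low (wt m) (g - MvPolynomial.monomial m 1) := by
  classical
  unfold Std at h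
  push Not at h
  obtain ⟨i, j, hi, hj, T, hT, hTS, hr⟩ := h
  rcases le_total j i with hji | hij
  · exact red_of_chain r m i j hji hi T hT hTS hr
  · refine red_of_chain r m j i hij hj (T.image Prod.swap) ?_ ?_ ?_
    · intro e he e' he' hne
      rw [Finset.mem_image] at he he'
      obtain ⟨a, ha, rfl⟩ := he
      obtain ⟨b, hb, rfl⟩ := he'
      have := hT a ha b hb (by rintro rfl; exact hne rfl)
      simp only [Prod.fst_swap, Prod.snd_swap]; omega
    · intro e he
      rw [Finset.mem_image] at he
      obtain ⟨a, ha, rfl⟩ := he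
      have := hTS a ha
      exact ⟨this.1.symm, this.2.2, this.2.1⟩
    · rw [Finset.card_image_of_injective _ Prod.swap_injective, hsym]; exact hr

def StdP (r : ℕ → ℕ → ℕ) (f : MvPolynomial (SSVar n) K) : Prop :=
  ∀ d, f.coeff d ≠ 0 → Std n (SM d) r

theorem StdP.add {r : ℕ → ℕ → ℕ} {f g : MvPolynomial (SSVar n) K} (hf : StdP r f) (hg : StdP r g) :
    StdP r (f + g) := by
  intro d hd
  by_cases h : f.coeff d = 0
  · exact hg d (by intro h'; apply hd; simp [h, h'])
  · exact hf d h

theorem StdP.smul {r : ℕ → ℕ → ℕ} {f : MvPolynomial (SSVar n) K} (hf : StdP r f) (c : K) :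
    StdP r (MvPolynomial.C c * f) := by
  intro d hd
  apply hf d
  intro h; apply hd; rw [MvPolynomial.coeff_C_mul, h, mul_zero]

theorem Low.smul {w : ℕ} {f : MvPolynomial (SSVar n) K} (hf : Low w f) (c : K) :
    Low w (MvPolynomial.C c * f) := by
  intro d hd
  apply hf d
  intro h; apply hd; rw [MvPolynomial.coeff_C_mul, h, mul_zero]

/-- reduce a polynomial of low weight -/
theorem red_low (r : ℕ → ℕ → ℕ) (hsym : ∀ i j, r i j = r j i) (w : ℕ) :
    ∀ f : MvPolynomial (SSVar n) K, Low w f → ∃ h, StdP r h ∧ Low w h ∧ f - h ∈ IR K n r := by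
  induction w with
  | zero =>
    intro f hf
    refine ⟨0, fun d hd => by simp at hd, Low.zero, ?_⟩
    have : f = 0 := by
      ext d; rw [MvPolynomial.coeff_zero]; by_contra h; exact absurd (hf d h) (Nat.not_lt_zero _)
    rw [this]; simp
  | succ w ih =>
    have hmon : ∀ m : SSVar n →₀ ℕ, wt m < w + 1 → ∃ h : MvPolynomial (SSVar n) K, StdP r h ∧ Low (w + 1) h ∧
        MvPolynomial.monomial m 1 - h ∈ IR K n r := by
      intro m hm
      by_cases hs : Std n (SM m) r
      · refine ⟨MvPolynomial.monomial m 1, ?_, ?_, by simp⟩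
        · intro d hd
          rw [MvPolynomial.coeff_monomial] at hd
          split_ifs at hd with h
          · exact h ▸ hs
          · exact absurd rfl hd
        · intro d hd
          rw [MvPolynomial.coeff_monomial] at hd
          split_ifs at hd with h
          · exact h ▸ hm
          · exact absurd rfl hd
      · obtain ⟨g, hg, hl⟩ := red_mono (K := K) r hsym m hs
        obtain ⟨h, h1, h2, h3⟩ := ih _ (hl.mono (Nat.lt_succ_iff.1 hm))
        refine ⟨MvPolynomial.C (-1) * h, h1.smul _, (h2.smul _).mono (Nat.le_succ _), ?_⟩
        have : MvPolynomial.monomial m 1 - MvPolynomial.C (-1) * h = g - (g - MvPolynomial.monomial m 1 - h) := by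
          rw [MvPolynomial.C_neg, MvPolynomial.C_1]; ring
        rw [this]
        exact Ideal.sub_mem _ hg h3
    have key : ∀ (s : Finset (SSVar n →₀ ℕ)) (c : (SSVar n →₀ ℕ) → K), (∀ m ∈ s, wt m < w + 1) →
        ∃ h, StdP r h ∧ Low (w + 1) h ∧ (∑ m ∈ s, MvPolynomial.monomial m (c m)) - h ∈ IR K n r := by
      classical
      intro s c
      induction s using Finset.induction_on with
      | empty => intro _; exact ⟨0, fun d hd => by simp at hd, Low.zero, by simp⟩
      | insert a s ha ih =>
        intro hs
        obtain ⟨h, h1, h2, h3⟩ := ih fun m hm => hs m (by simp [hm])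
        obtain ⟨h', h1', h2', h3'⟩ := hmon a (hs a (by simp))
        refine ⟨MvPolynomial.C (c a) * h' + h, (h1'.smul _).add h1, (h2'.smul _).add h2, ?_⟩
        rw [Finset.sum_insert ha]
        have : MvPolynomial.monomial a (c a) + ∑ x ∈ s, MvPolynomial.monomial x (c x) - (MvPolynomial.C (c a) * h' + h)
          = MvPolynomial.C (c a) * (MvPolynomial.monomial a 1 - h') + (∑ x ∈ s, MvPolynomial.monomial x (c x) - h) := by
          rw [mul_sub, MvPolynomial.C_mul_monomial, mul_one]; ring
        rw [this]
        exact Ideal.add_mem _ (Ideal.mul_mem_left _ _ h3') h3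
    intro f hf
    obtain ⟨h, h1, h2, h3⟩ := key f.support (fun m => f.coeff m) (fun m hm => hf m (MvPolynomial.mem_support_iff.1 hm))
    refine ⟨h, h1, h2, ?_⟩
    rwa [← MvPolynomial.as_sum] at h3

theorem red_all (r : ℕ → ℕ → ℕ) (hsym : ∀ i j, r i j = r j i) (f : MvPolynomial (SSVar n) K) :
    ∃ h, StdP r h ∧ f - h ∈ IR K n r := by
  obtain ⟨h, h1, -, h3⟩ := red_low r hsym ((f.support.sup wt) + 1) f (by
    intro d hd
    exact Nat.lt_succ_of_le (Finset.le_sup (f := wt) (MvPolynomial.mem_support_iff.2 hd)))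
  exact ⟨h, h1, h3⟩

/-- the linear map version keeping coefficient of a maximal-weight standard monomial -/
theorem red_keep (r : ℕ → ℕ → ℕ) (hsym : ∀ i j, r i j = r j i) (f : MvPolynomial (SSVar n) K)
    (m : SSVar n →₀ ℕ) (hm : f.coeff m ≠ 0) (hmax : ∀ d, f.coeff d ≠ 0 → wt d ≤ wt m) (hs : Std n (SM m) r) :
    ∃ h, StdP r h ∧ h.coeff m ≠ 0 ∧ f - h ∈ IR K n r := by
  classical
  -- split f into standard part + non-standard part
  have key : ∀ s : Finset (SSVar n →₀ ℕ), (∀ d ∈ s, wt d ≤ wt m) →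
      ∃ h, StdP r h ∧ h.coeff m = (if m ∈ s then f.coeff m else 0) ∧
        (∑ d ∈ s, MvPolynomial.monomial d (f.coeff d)) - h ∈ IR K n r := by
    intro s
    induction s using Finset.induction_on with
    | empty => intro _; exact ⟨0, fun d hd => by simp at hd, by simp, by simp⟩
    | insert a s ha ih =>
      intro hs'
      obtain ⟨h, h1, h2, h3⟩ := ih fun d hd => hs' d (by simp [hd])
      obtain ⟨h', h1', h2', h3'⟩ : ∃ h' : MvPolynomial (SSVar n) K, StdP r h' ∧
          h'.coeff m = (if m = a then 1 else 0) ∧ MvPolynomial.monomial a 1 - h' ∈ IR K n r := by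
        by_cases hsa : Std n (SM a) r
        · refine ⟨MvPolynomial.monomial a 1, ?_, ?_, by simp⟩
          · intro d hd
            rw [MvPolynomial.coeff_monomial] at hd
            split_ifs at hd with h
            · exact h ▸ hsa
            · exact absurd rfl hd
          · rw [MvPolynomial.coeff_monomial]; simp only [eq_comm]
        · obtain ⟨g, hg, hl⟩ := red_mono (K := K) r hsym a hsa
          obtain ⟨h, h1, h2, h3⟩ := red_low r hsym _ _ hl
          refine ⟨MvPolynomial.C (-1) * h, h1.smul _, ?_, ?_⟩
          · rw [if_neg (by rintro rfl; exact hsa hs), MvPolynomial.coeff_C_mul]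
            have : h.coeff m = 0 := by
              by_contra hh
              have := h2 m hh
              have := hs' a (by simp)
              omega
            rw [this, mul_zero]
          · have : MvPolynomial.monomial a 1 - MvPolynomial.C (-1) * h = g - (g - MvPolynomial.monomial a 1 - h) := by
              rw [MvPolynomial.C_neg, MvPolynomial.C_1]; ring
            rw [this]
            exact Ideal.sub_mem _ hg h3
      refine ⟨MvPolynomial.C (f.coeff a) * h' + h, (h1'.smul _).add h1, ?_, ?_⟩
      · rw [MvPolynomial.coeff_add, MvPolynomial.coeff_C_mul, h2', h2]
        by_cases hma : m = a
        · subst hma; simp [ha]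
        · simp [hma]
      · rw [Finset.sum_insert ha]
        have : MvPolynomial.monomial a (f.coeff a) + ∑ x ∈ s, MvPolynomial.monomial x (f.coeff x) - (MvPolynomial.C (f.coeff a) * h' + h)
          = MvPolynomial.C (f.coeff a) * (MvPolynomial.monomial a 1 - h') + (∑ x ∈ s, MvPolynomial.monomial x (f.coeff x) - h) := by
          rw [mul_sub, MvPolynomial.C_mul_monomial, mul_one]; ring
        rw [this]
        exact Ideal.add_mem _ (Ideal.mul_mem_left _ _ h3') h3
  obtain ⟨h, h1, h2, h3⟩ := key f.support (fun d hd => hmax d (MvPolynomial.mem_support_iff.1 hd))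
  refine ⟨h, h1, ?_, ?_⟩
  · rw [h2, if_pos (MvPolynomial.mem_support_iff.2 hm)]; exact hm
  · rwa [← MvPolynomial.as_sum] at h3

end
end

section

structure Inv (w : ℕ → ℕ) : Prop where
  inv : ∀ a, w (w a) = a
  ne : ∀ a, w a ≠ a

theorem Inv.inj {w : ℕ → ℕ} (h : Inv w) {a b : ℕ} (hab : w a = w b) : a = b := by
  rw [← h.inv a, hab, h.inv]

theorem Inv.far {w : ℕ → ℕ} (h : Inv w) (N : ℕ) : ∃ s, N ≤ s ∧ N ≤ w s := by
  refine ⟨N + ∑ a ∈ Finset.range N, w a + 1, by omega, ?_⟩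
  by_contra hlt
  rw [not_le] at hlt
  have h1 := Finset.single_le_sum (f := w) (s := Finset.range N) (fun _ _ => Nat.zero_le _)
    (Finset.mem_range.2 hlt)
  rw [h.inv] at h1
  omega

def rk (w : ℕ → ℕ) (i j : ℕ) : ℕ := ((Finset.range i).filter fun a => w a < j).card

theorem rk_succ (w : ℕ → ℕ) (i j : ℕ) : rk w (i + 1) j = rk w i j + if w i < j then 1 else 0 := by
  unfold rk
  rw [Finset.range_add_one, Finset.filter_insert]
  split_ifs
  · rw [Finset.card_insert_of_notMem (by simp)]
  · rfl

theorem rk_symm {w : ℕ → ℕ} (h : Inv w) (i j : ℕ) : rk w i j = rk w j i := by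
  unfold rk
  apply Finset.card_nbij' w w
  · intro a ha
    simp only [Finset.coe_filter, Finset.mem_range, Set.mem_ofPred_eq] at ha ⊢
    rw [h.inv]; exact ha.symm
  · intro a ha
    simp only [Finset.coe_filter, Finset.mem_range, Set.mem_ofPred_eq] at ha ⊢
    rw [h.inv]; exact ha.symm
  · intro a _; exact h.inv a
  · intro a _; exact h.inv a

def cj (w : ℕ → ℕ) (p r : ℕ) (a : ℕ) : ℕ := Equiv.swap p r (w (Equiv.swap p r a))

theorem Inv.cj {w : ℕ → ℕ} (h : Inv w) (p r : ℕ) : Inv (cj w p r) := by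
  constructor
  · intro a; simp [Paper.cj, h.inv]
  · intro a ha
    unfold Paper.cj at ha
    have := congrArg (Equiv.swap p r) ha
    rw [Equiv.swap_apply_self] at this
    exact h.ne _ this

theorem cj_vals {w : ℕ → ℕ} (h : Inv w) {q p s r : ℕ} (hq : w q = p) (hs : w s = r)
    (h1 : q < p) (h2 : q < s) (h3 : p < r) :
    cj w p r q = r ∧ cj w p r r = q ∧ cj w p r p = s ∧ cj w p r s = p ∧
    ∀ a, a ≠ q → a ≠ p → a ≠ s → a ≠ r → cj w p r a = w a := by
  have hp : w p = q := by rw [← hq, h.inv]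
  have hr : w r = s := by rw [← hs, h.inv]
  have hsp : s ≠ p := by rintro rfl; omega
  have hsr : s ≠ r := by rintro rfl; exact h.ne _ hs
  refine ⟨?_, ?_, ?_, ?_, ?_⟩
  · unfold cj; rw [Equiv.swap_apply_of_ne_of_ne (x := q) (by omega) (by omega), hq, Equiv.swap_apply_left]
  · unfold cj; rw [Equiv.swap_apply_right, hp, Equiv.swap_apply_of_ne_of_ne (by omega) (by omega)]
  · unfold cj; rw [Equiv.swap_apply_left, hr, Equiv.swap_apply_of_ne_of_ne hsp hsr]
  · unfold cj; rw [Equiv.swap_apply_of_ne_of_ne hsp hsr, hs, Equiv.swap_apply_right]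
  · intro a a1 a2 a3 a4
    unfold cj
    rw [Equiv.swap_apply_of_ne_of_ne a2 a4, Equiv.swap_apply_of_ne_of_ne]
    · intro h'; apply a1; rw [← h.inv a, h', hp]
    · intro h'; apply a3; rw [← h.inv a, h', hr]

theorem rk_diff {w : ℕ → ℕ} (h : Inv w) {q p s r : ℕ} (hq : w q = p) (hs : w s = r)
    (h1 : q < p) (h2 : q < s) (h3 : p < r) (i j : ℕ) :
    rk w i j = rk (cj w p r) i j + (if q < i ∧ i ≤ s ∧ p < j ∧ j ≤ r then 1 else 0)
      + (if p < i ∧ i ≤ r ∧ q < j ∧ j ≤ s then 1 else 0) := by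
  obtain ⟨c1, c2, c3, c4, c5⟩ := cj_vals h hq hs h1 h2 h3
  have hp : w p = q := by rw [← hq, h.inv]
  have hr : w r = s := by rw [← hs, h.inv]
  have hsp : s ≠ p := by rintro rfl; omega
  have hsr : s ≠ r := by rintro rfl; exact h.ne _ hs
  induction i with
  | zero => simp [rk]
  | succ i ih =>
    rw [rk_succ, rk_succ, ih]
    by_cases a1 : i = q
    · subst a1; rw [c1, hq]; split_ifs <;> omega
    by_cases a2 : i = p
    · subst a2; rw [c3, hp]; split_ifs <;> omega
    by_cases a3 : i = s
    · subst a3; rw [c4, hs]; split_ifs <;> omega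
    by_cases a4 : i = r
    · subst a4; rw [c2, hr]; split_ifs <;> omega
    rw [c5 i a1 a2 a3 a4]
    have : (q < i + 1 ∧ i + 1 ≤ s ∧ p < j ∧ j ≤ r) ↔ (q < i ∧ i ≤ s ∧ p < j ∧ j ≤ r) := by omega
    simp only [this]
    have : (p < i + 1 ∧ i + 1 ≤ r ∧ q < j ∧ j ≤ s) ↔ (p < i ∧ i ≤ r ∧ q < j ∧ j ≤ s) := by omega
    simp only [this]
    omega

theorem rk_even {w : ℕ → ℕ} (h : Inv w) (k : ℕ) : Even (rk w k k) := by
  unfold rk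
  rw [← ZMod.natCast_eq_zero_iff_even, Finset.card_eq_sum_ones, Nat.cast_sum]
  apply Finset.sum_involution (fun a _ => w a)
  · intro a _; decide
  · intro a _ _; exact h.ne a
  · intro a ha
    rw [Finset.mem_filter, Finset.mem_range] at ha ⊢
    rw [h.inv]; exact ha.symm
  · intro a _; exact h.inv a

theorem chain_swap {T : Finset (ℕ × ℕ)} (hT : Chain T) : Chain (T.image Prod.swap) := by
  intro e he e' he' hne
  rw [Finset.mem_image] at he he'
  obtain ⟨a, ha, rfl⟩ := he
  obtain ⟨b, hb, rfl⟩ := he'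
  have := hT a ha b hb (by rintro rfl; exact hne rfl)
  simp only [Prod.fst_swap, Prod.snd_swap]; omega

theorem double_chain {U : Finset (ℕ × ℕ)} (hU : Chain U) (hlt : (∀ e ∈ U, e.1 < e.2) ∨ (∀ e ∈ U, e.2 < e.1)) :
    Chain (U ∪ U.image Prod.swap) ∧ (U ∪ U.image Prod.swap).card = 2 * U.card := by
  have hlt' : ∀ e ∈ U, ∀ e' ∈ U, (e.1 < e.2 ∧ e'.1 < e'.2) ∨ (e.2 < e.1 ∧ e'.2 < e'.1) := by
    intro e he e' he'
    rcases hlt with h | h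
    · exact Or.inl ⟨h _ he, h _ he'⟩
    · exact Or.inr ⟨h _ he, h _ he'⟩
  have cross : ∀ a ∈ U, ∀ b ∈ U, (a.1 < b.2 ∧ b.1 < a.2) ∨ (b.2 < a.1 ∧ a.2 < b.1) := by
    intro a ha b hb
    have h1 := hlt' a ha b hb
    by_cases hab : a = b
    · subst hab; omega
    · have := hU a ha b hb hab; omega
  constructor
  · intro e he e' he' hne
    rw [Finset.mem_union, Finset.mem_image] at he he'
    rcases he with he | ⟨a, ha, rfl⟩ <;> rcases he' with he' | ⟨b, hb, rfl⟩
    · exact hU e he e' he' hne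
    · have := cross e he b hb
      simp only [Prod.fst_swap, Prod.snd_swap]; omega
    · have := cross a ha e' he'
      simp only [Prod.fst_swap, Prod.snd_swap]; omega
    · have := hU a ha b hb (by rintro rfl; exact hne rfl)
      simp only [Prod.fst_swap, Prod.snd_swap]; omega
  · rw [Finset.card_union_of_disjoint, Finset.card_image_of_injective _ Prod.swap_injective]
    · omega
    · rw [Finset.disjoint_left]
      intro e he he'
      rw [Finset.mem_image] at he'
      obtain ⟨a, ha, rfl⟩ := he'
      have := hlt' a ha _ he
      simp only [Prod.fst_swap, Prod.snd_swap] at this; omega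

theorem CL_fin {w : ℕ → ℕ} (h : Inv w) {n q p s r : ℕ} (S : ℕ → ℕ → Prop) (hSs : ∀ a b, S a b → S b a)
    (hSn : ∀ a, ¬ S a a) (hstd : Std n S (rk w)) (hq : w q = p) (hs : w s = r)
    (h1 : q < p) (h2 : q < s) (h3 : p < r)
    (hA : ∀ i j, i ≤ n → j ≤ n → q < i → i ≤ s → p < j → j ≤ r →
      ∀ T, Chain T → (∀ e ∈ T, S e.1 e.2 ∧ e.1 < i ∧ e.2 < j) → T.card + 1 ≤ rk w i j)
    (hmid : ∀ k a, k ≤ n → k ≤ s → k ≤ r → a < k → w a < k → w a ≤ p) :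
    Std n S (rk (cj w p r)) := by
  intro i j hi hj T hT hTS
  have hd := rk_diff h hq hs h1 h2 h3 i j
  have hB : ∀ i j, i ≤ n → j ≤ n → q < j → j ≤ s → p < i → i ≤ r →
      ∀ T, Chain T → (∀ e ∈ T, S e.1 e.2 ∧ e.1 < i ∧ e.2 < j) → T.card + 1 ≤ rk w i j := by
    intro i j hi hj a1 a2 a3 a4 T hT hTS
    rw [rk_symm h]
    rw [← Finset.card_image_of_injective T Prod.swap_injective]
    apply hA j i hj hi a1 a2 a3 a4 _ (chain_swap hT)
    intro e he
    rw [Finset.mem_image] at he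
    obtain ⟨a, ha, rfl⟩ := he
    have := hTS a ha
    exact ⟨hSs _ _ this.1, this.2.2, this.2.1⟩
  have h0 := hstd i j hi hj T hT hTS
  by_cases c1 : q < i ∧ i ≤ s ∧ p < j ∧ j ≤ r <;> by_cases c2 : p < i ∧ i ≤ r ∧ q < j ∧ j ≤ s
  · rw [if_pos c1, if_pos c2] at hd
    obtain ⟨k, hk1, hk2, hk3⟩ : ∃ k, i ≤ k ∧ j ≤ k ∧ (k = i ∨ k = j) := by
      rcases le_total i j with hh | hh
      · exact ⟨j, hh, le_rfl, Or.inr rfl⟩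
      · exact ⟨i, le_rfl, hh, Or.inl rfl⟩
    have hkk : rk w k k = rk w i j := by
      unfold rk
      congr 1
      ext a
      simp only [Finset.mem_filter, Finset.mem_range]
      constructor
      · rintro ⟨b1, b2⟩
        have e1 := hmid k a (by omega) (by omega) (by omega) b1 b2
        have e2 := hmid k (w a) (by omega) (by omega) (by omega) b2 (by rw [h.inv]; exact b1)
        rw [h.inv] at e2
        omega
      · rintro ⟨b1, b2⟩; omega
    obtain ⟨t, ht⟩ := rk_even h k
    have hdbl : ∀ U ⊆ T, ((∀ e ∈ U, e.1 < e.2) ∨ (∀ e ∈ U, e.2 < e.1)) → 2 * U.card + 1 ≤ rk w k k := by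
      intro U hU hlt
      have hcU : Chain U := fun e he e' he' => hT e (hU he) e' (hU he')
      obtain ⟨d1, d2⟩ := double_chain hcU hlt
      rw [← d2]
      apply hA k k (by omega) (by omega) (by omega) (by omega) (by omega) (by omega) _ d1
      intro e he
      rw [Finset.mem_union, Finset.mem_image] at he
      rcases he with he | ⟨a, ha, rfl⟩
      · have := hTS e (hU he)
        exact ⟨this.1, by omega, by omega⟩
      · have := hTS a (hU ha)
        simp only [Prod.fst_swap, Prod.snd_swap]
        exact ⟨hSs _ _ this.1, by omega, by omega⟩
    have s1 := hdbl (T.filter fun e => e.1 < e.2) (Finset.filter_subset _ _)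
      (Or.inl fun e he => (Finset.mem_filter.1 he).2)
    have s2 := hdbl (T.filter fun e => ¬ e.1 < e.2) (Finset.filter_subset _ _)
      (Or.inr fun e he => by
        rw [Finset.mem_filter] at he
        have : e.1 ≠ e.2 := by
          intro h'; have := (hTS e he.1).1; rw [h'] at this; exact hSn _ this
        omega)
    have s3 := Finset.card_filter_add_card_filter_not (s := T) (fun e => e.1 < e.2)
    omega
  · rw [if_pos c1, if_neg c2] at hd
    have := hA i j hi hj c1.1 c1.2.1 c1.2.2.1 c1.2.2.2 T hT hTS
    omega
  · rw [if_neg c1, if_pos c2] at hd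
    have := hB i j hi hj c2.2.2.1 c2.2.2.2 c2.1 c2.2.1 T hT hTS
    omega
  · rw [if_neg c1, if_neg c2] at hd
    omega

theorem CL {w : ℕ → ℕ} (h : Inv w) {n q p : ℕ} (S : ℕ → ℕ → Prop) (hSs : ∀ a b, S a b → S b a)
    (hSn : ∀ a, ¬ S a a) (hSb : ∀ a b, S a b → a < n ∧ b < n) (hstd : Std n S (rk w)) (hq : w q = p)
    (hqn : q < n) (hp : p < n) (hmin : ∀ a, a < q → n ≤ w a) (hqp : ¬ S q p) :
    ∃ s r, q < s ∧ p < r ∧ w s = r ∧ Std n S (rk (cj w p r)) := by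
  classical
  have hwp : w p = q := by rw [← hq, h.inv]
  have h1 : q < p := by
    have h0 : q ≠ p := by rintro rfl; exact h.ne _ hq
    by_contra h'
    have := hmin p (by omega)
    rw [hwp] at this; omega
  have one : ∀ a b, S a b → 1 ≤ rk w (a + 1) (b + 1) := by
    intro a b hab
    have := hSb a b hab
    have := hstd (a + 1) (b + 1) (by omega) (by omega) {(a, b)} (by
      intro e he e' he' hne
      rw [Finset.mem_singleton] at he he'
      exact absurd (he.trans he'.symm) hne) (by
      intro e he
      rw [Finset.mem_singleton] at he
      subst he
      exact ⟨hab, by simp, by simp⟩)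
    simpa using this
  have one' : ∀ a b, S a b → ∃ c, c ≤ a ∧ w c ≤ b := by
    intro a b hab
    have := one a b hab
    unfold rk at this
    obtain ⟨c, hc⟩ := Finset.card_pos.1 this
    rw [Finset.mem_filter, Finset.mem_range] at hc
    exact ⟨c, by omega, by omega⟩
  have hrow : ∀ a b, S a b → q ≤ a := by
    intro a b hab
    obtain ⟨c, c1, c2⟩ := one' a b hab
    by_contra h'
    have := hmin c (by omega)
    have := hSb a b hab
    omega
  by_cases hV : ∃ V, S q V
  · obtain ⟨V, hV1, hV2⟩ : ∃ V, S q V ∧ ∀ b, S q b → V ≤ b :=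
      ⟨Nat.find hV, Nat.find_spec hV, fun b hb => Nat.find_min' hV hb⟩
    have hVn := (hSb _ _ hV1).2
    have hVp : p < V := by
      obtain ⟨c, c1, c2⟩ := one' q V hV1
      have : c = q := by
        by_contra h'
        have := hmin c (by omega)
        omega
      subst this
      have : V ≠ p := by rintro rfl; exact hqp hV1
      omega
    have hex : ∃ s, q < s ∧ p < w s ∧ w s ≤ V := by
      refine ⟨w V, ?_, ?_, ?_⟩
      · have e1 : w V ≠ q := by
          intro h'; have : V = p := by rw [← h.inv V, h', hq]
          omega
        by_contra h'
        have := hmin (w V) (by omega)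
        rw [h.inv] at this; omega
      · rw [h.inv]; exact hVp
      · rw [h.inv]
    obtain ⟨s, ⟨s1, s2, s3⟩, s4⟩ : ∃ s, (q < s ∧ p < w s ∧ w s ≤ V) ∧ ∀ b, (q < b ∧ p < w b ∧ w b ≤ V) → s ≤ b :=
      ⟨Nat.find hex, Nat.find_spec hex, fun b hb => Nat.find_min' hex hb⟩
    have hrows : ∀ a, a < s → w a ≤ V → w a ≤ p := by
      intro a ha hwa
      rcases lt_trichotomy a q with h' | rfl | h'
      · have := hmin a h'; omega
      · omega
      · by_contra h''
        have := s4 a ⟨h', by omega, hwa⟩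
        omega
    refine ⟨s, w s, s1, s2, rfl, CL_fin h S hSs hSn hstd hq rfl h1 s1 s2 ?_ ?_⟩
    · intro i j hi hj i1 i2 j1 j2 T hT hTS
      have hlt : ∀ e ∈ T, q < e.1 ∧ e.2 < V := by
        intro e he
        have e1 := hTS e he
        have e2 := hrow _ _ e1.1
        refine ⟨?_, by omega⟩
        by_contra h'
        have e3 : e.1 = q := by omega
        rw [e3] at e1
        have := hV2 _ e1.1
        omega
      have hnot : (q, V) ∉ T := by
        intro h'; have := hlt _ h'; simp at this
      have := hstd i (V + 1) hi (by omega) (insert (q, V) T) (by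
        intro e he e' he' hne
        rw [Finset.mem_insert] at he he'
        rcases he with rfl | he <;> rcases he' with rfl | he'
        · exact absurd rfl hne
        · exact Or.inl (hlt _ he')
        · exact Or.inr (hlt _ he)
        · exact hT e he e' he' hne) (by
        intro e he
        rw [Finset.mem_insert] at he
        rcases he with rfl | he
        · exact ⟨hV1, i1, by simp⟩
        · have := hTS e he
          exact ⟨this.1, this.2.1, by omega⟩)
      rw [Finset.card_insert_of_notMem hnot] at this
      refine this.trans ?_
      unfold rk
      apply Finset.card_le_card
      intro a ha
      rw [Finset.mem_filter, Finset.mem_range] at ha ⊢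
      have := hrows a (by omega) (by omega)
      omega
    · intro k a _ k2 k3 k4 k5
      exact hrows a (by omega) (by omega)
  · push Not at hV
    have hex : ∃ s, q < s ∧ p < w s := by
      obtain ⟨s, s1, s2⟩ := h.far (p + 1)
      exact ⟨s, by omega, by omega⟩
    obtain ⟨s, ⟨s1, s2⟩, s4⟩ : ∃ s, (q < s ∧ p < w s) ∧ ∀ b, (q < b ∧ p < w b) → s ≤ b :=
      ⟨Nat.find hex, Nat.find_spec hex, fun b hb => Nat.find_min' hex hb⟩
    have hrows : ∀ a, q ≤ a → a < s → w a ≤ p := by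
      intro a ha1 ha
      rcases ha1.eq_or_lt with rfl | h'
      · omega
      · by_contra h''
        have := s4 a ⟨h', by omega⟩
        omega
    refine ⟨s, w s, s1, s2, rfl, CL_fin h S hSs hSn hstd hq rfl h1 s1 s2 ?_ ?_⟩
    · intro i j hi hj i1 i2 j1 j2 T hT hTS
      have c1 : T.card ≤ (Finset.Ioo q i).card := by
        apply Finset.card_le_card_of_injOn Prod.fst
        · intro e he
          have e1 := hTS e he
          have e2 := hrow _ _ e1.1
          rw [Finset.coe_Ioo]
          refine ⟨lt_of_le_of_ne e2 ?_, e1.2.1⟩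
          intro h'; rw [← h'] at e1; exact hV _ e1.1
        · intro e he e' he' hee
          by_contra hne
          have := hT e he e' he' hne
          omega
      have c2 : (Finset.Ico q i).card ≤ rk w i j := by
        unfold rk
        apply Finset.card_le_card
        intro a ha
        rw [Finset.mem_Ico] at ha
        rw [Finset.mem_filter, Finset.mem_range]
        have := hrows a ha.1 (by omega)
        omega
      simp at c1 c2
      omega
    · intro k a _ k2 k3 k4 k5
      apply hrows a _ (by omega)
      by_contra h'
      have := hmin a (by omega)
      omega

end

section

section
variable {R : Type*} [CommRing R] {n : ℕ}

def sg (R : Type*) [CommRing R] (w : ℕ → ℕ) (a : ℕ) : R := if a < w a then 1 else -1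

theorem sg_w {w : ℕ → ℕ} (h : Inv w) (a : ℕ) : sg R w (w a) = - sg R w a := by
  unfold sg
  rw [h.inv]
  have := h.ne a
  split_ifs <;> first | omega | simp

def Am (N : ℕ) (w : ℕ → ℕ) (β : Fin n → ℕ → R) : Matrix (Fin n) (Fin n) R :=
  Matrix.of fun i j => ∑ a ∈ Finset.range N, sg R w a * (β i a * β j (w a))

def Tri (β : Fin n → ℕ → R) : Prop := ∀ (i : Fin n) (a : ℕ), (i : ℕ) < a → β i a = 0

theorem Am_N (N : ℕ) (w : ℕ → ℕ) (β : Fin n → ℕ → R) (hβ : Tri β) (hN : n ≤ N) :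
    Am N w β = Am n w β := by
  ext i j
  simp only [Am, Matrix.of_apply]
  symm
  apply Finset.sum_subset (Finset.range_mono hN)
  intro a _ ha
  rw [Finset.mem_range, not_lt] at ha
  rw [hβ i a (by omega)]; ring

theorem Am_filter (w : ℕ → ℕ) (β : Fin n → ℕ → R) (hβ : Tri β) (i j : Fin n) (I J : ℕ) (hi : (i : ℕ) < I)
    (hj : (j : ℕ) < J) (hI : I ≤ n) :
    Am n w β i j = ∑ a ∈ (Finset.range I).filter (fun a => w a < J), sg R w a * (β i a * β j (w a)) := by
  simp only [Am, Matrix.of_apply]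
  symm
  apply Finset.sum_subset
  · intro a ha; rw [Finset.mem_filter, Finset.mem_range] at ha; rw [Finset.mem_range]; omega
  · intro a _ ha
    rw [Finset.mem_filter, Finset.mem_range] at ha
    by_cases h : a < I
    · rw [hβ j (w a) (by have := fun h' => ha ⟨h, h'⟩; omega)]; ring
    · rw [hβ i a (by omega)]; ring

theorem Am_skew {w : ℕ → ℕ} (h : Inv w) (β : Fin n → ℕ → R) (hβ : Tri β) (i j : Fin n) :
    Am n w β i j = - Am n w β j i := by
  rw [Am_filter w β hβ i j n n i.2 j.2 le_rfl, Am_filter w β hβ j i n n j.2 i.2 le_rfl, ← Finset.sum_neg_distrib]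
  apply Finset.sum_nbij' w w
  · intro a ha
    simp only [Finset.mem_filter, Finset.mem_range] at ha ⊢
    rw [h.inv]; exact ha.symm
  · intro a ha
    simp only [Finset.mem_filter, Finset.mem_range] at ha ⊢
    rw [h.inv]; exact ha.symm
  · intro a _; exact h.inv a
  · intro a _; exact h.inv a
  · intro a _; rw [sg_w h, h.inv]; ring

theorem Am_diag {w : ℕ → ℕ} (h : Inv w) (β : Fin n → ℕ → R) (hβ : Tri β) (i : Fin n) :
    Am n w β i i = 0 := by
  rw [Am_filter w β hβ i i n n i.2 i.2 le_rfl]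
  apply Finset.sum_involution (fun a _ => w a)
  · intro a _; rw [sg_w h, h.inv]; ring
  · intro a _ _; exact h.ne a
  · intro a ha
    rw [Finset.mem_filter, Finset.mem_range] at ha ⊢
    rw [h.inv]; exact ha.symm
  · intro a _; exact h.inv a

theorem pf_map {S : Type*} [CommRing S] (f : R →+* S) {N : ℕ} (A : Matrix (Fin N) (Fin N) R) :
    f (Pfaffian A) = Pfaffian (A.map f) := by
  unfold Pfaffian
  rw [map_sum]
  apply Finset.sum_congr rfl
  intro z _
  rw [map_mul, map_pow, map_neg, map_one, map_prod]
  rfl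

end

section
variable {K : Type*} [Field K] {n : ℕ}

theorem Am_rank (w : ℕ → ℕ) (β : Fin n → ℕ → K) (hβ : Tri β) (I J : ℕ) (hI : I ≤ n) (hJ : J ≤ n) :
    ((Am n w β).submatrix (Fin.castLE hI) (Fin.castLE hJ)).rank ≤ rk w I J := by
  have : (Am n w β).submatrix (Fin.castLE hI) (Fin.castLE hJ) =
     (Matrix.of fun (i : Fin I) (a : ((Finset.range I).filter (fun a => w a < J))) => sg K w a * β (Fin.castLE hI i) a) *
     (Matrix.of fun (a : ((Finset.range I).filter (fun a => w a < J))) (j : Fin J) => β (Fin.castLE hJ j) (w a)) := by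
    ext i j
    rw [Matrix.submatrix_apply, Am_filter w β hβ _ _ I J i.2 j.2 hI, Matrix.mul_apply, ← Finset.sum_coe_sort]
    apply Finset.sum_congr rfl
    intro a _
    simp only [Matrix.of_apply]; ring
  rw [this]
  refine (Matrix.rank_mul_le_left _ _).trans ((Matrix.rank_le_card_width _).trans ?_)
  simp [rk]

/-- I ⊆ IX -/
theorem eval_pf_zero (A : Matrix (Fin n) (Fin n) K) (hA : Alt A) (i j r : ℕ) (hi : i ≤ n) (hj : j ≤ n)
    (hr : (A.submatrix (Fin.castLE hi) (Fin.castLE hj)).rank ≤ r) (R : Finset (Fin n))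
    (hRi : ∀ a ∈ R, (a : ℕ) + 1 ≤ i) (hRj : r < (R.filter fun a : Fin n => (a : ℕ) + 1 ≤ j).card) :
    MvPolynomial.eval (fun v : SSVar n => A v.1.1 v.1.2) (pfUss K R) = 0 := by
  classical
  unfold pfUss
  rw [pf_map]
  have hmap : ((Uss K n).submatrix (fun s => R.orderEmbOfFin rfl s) fun t => R.orderEmbOfFin rfl t).map
      (MvPolynomial.eval (fun v : SSVar n => A v.1.1 v.1.2)) =
      A.submatrix (R.orderEmbOfFin rfl) (R.orderEmbOfFin rfl) := by
    ext s t
    simp only [Matrix.map_apply, Matrix.submatrix_apply, Uss, Matrix.of_apply]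
    split_ifs with h1 h2
    · simp
    · simp only [map_neg, MvPolynomial.eval_X]; rw [hA.2]; simp
    · have : R.orderEmbOfFin rfl s = R.orderEmbOfFin rfl t := le_antisymm (not_lt.1 h1) (not_lt.1 h2)
      rw [this, hA.1]; simp
  rw [hmap]
  set Q := R.filter fun a : Fin n => (a : ℕ) + 1 ≤ j with hQ
  have hQj : ∀ a : Q, (a.1 : ℕ) < j := fun a => by
    have := (Finset.mem_filter.1 a.2).2; omega
  let B : Matrix (Fin i) Q K := Matrix.of fun k a => A (Fin.castLE hi k) a.1
  have hB : B = (A.submatrix (Fin.castLE hi) (Fin.castLE hj)) *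
      (Matrix.of fun (l : Fin j) (a : Q) => if l = ⟨a.1, hQj a⟩ then (1 : K) else 0) := by
    ext k a
    rw [Matrix.mul_apply]
    simp [B]
  have hBr : B.rank < Q.card := by
    rw [hB]
    exact ((Matrix.rank_mul_le_left _ _).trans hr).trans_lt hRj
  obtain ⟨v, hv0, hv⟩ : ∃ v : Q → K, v ≠ 0 ∧ B.mulVec v = 0 := by
    by_contra hcon
    push Not at hcon
    have hinj : Function.Injective B.mulVecLin := by
      rw [← LinearMap.ker_eq_bot, LinearMap.ker_eq_bot']
      intro v hv
      by_contra h
      exact hcon v h (by simpa using hv)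
    have := LinearMap.finrank_range_of_inj hinj
    rw [Matrix.rank, this] at hBr
    simp at hBr
  obtain ⟨k0, hk0⟩ := Function.ne_iff.1 hv0
  have hk0R : k0.1 ∈ R := (Finset.mem_filter.1 k0.2).1
  obtain ⟨k, hk⟩ : ∃ k, R.orderEmbOfFin rfl k = k0.1 := by
    have : k0.1 ∈ Set.range (R.orderEmbOfFin rfl) := by rw [Finset.range_orderEmbOfFin]; exact hk0R
    exact this
  let v' : Fin R.card → K := fun l => if h : R.orderEmbOfFin rfl l ∈ Q then v ⟨_, h⟩ else 0
  have hker := pf_kernel (A.submatrix (R.orderEmbOfFin rfl) (R.orderEmbOfFin rfl)) (hA.submatrix _) v' (by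
    intro t
    have hti := hRi _ (Finset.orderEmbOfFin_mem R rfl t)
    have h0 := congrFun hv ⟨R.orderEmbOfFin rfl t, by omega⟩
    simp only [Matrix.mulVec, dotProduct, B, Matrix.of_apply, Pi.zero_apply] at h0
    have e1 : ∑ l, v' l * A.submatrix (R.orderEmbOfFin rfl) (R.orderEmbOfFin rfl) l t =
        ∑ a ∈ R, (if h : a ∈ Q then v ⟨a, h⟩ else 0) * A a (R.orderEmbOfFin rfl t) := by
      rw [← Finset.sum_coe_sort R]
      apply Fintype.sum_equiv (R.orderIsoOfFin rfl).toEquiv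
      intro l
      rfl
    have e2 : ∑ a ∈ R, (if h : a ∈ Q then v ⟨a, h⟩ else 0) * A a (R.orderEmbOfFin rfl t) =
        ∑ a ∈ Q, (if h : a ∈ Q then v ⟨a, h⟩ else 0) * A a (R.orderEmbOfFin rfl t) := by
      symm
      apply Finset.sum_subset (Finset.filter_subset _ _)
      intro a _ ha
      rw [dif_neg ha, zero_mul]
    rw [e1, e2, ← Finset.sum_coe_sort Q, ← neg_eq_zero, ← Finset.sum_neg_distrib]
    refine Eq.trans ?_ h0
    apply Finset.sum_congr rfl
    intro a _
    rw [dif_pos a.2, hA.2 a.1]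
    simp [mul_comm]) k
  have hv'k : v' k ≠ 0 := by
    have : v' k = v k0 := by
      simp only [v']
      rw [dif_pos (by rw [hk]; exact k0.2)]
      congr 1
      exact Subtype.ext hk
    rw [this]; exact hk0
  exact (mul_eq_zero.1 hker).resolve_left hv'k

/-- generic lower-triangular matrix -/
noncomputable def bG (K : Type*) [Field K] (n : ℕ) (i : Fin n) (a : ℕ) : MvPolynomial (Fin n × Fin n) K :=
  if h : a ≤ i then MvPolynomial.X (i, ⟨a, by omega⟩) else 0

noncomputable def Phi (K : Type*) [Field K] (n : ℕ) (w : ℕ → ℕ) :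
    MvPolynomial (SSVar n) K →ₐ[K] MvPolynomial (Fin n × Fin n) K :=
  MvPolynomial.aeval fun v => Am n w (bG K n) v.1.1 v.1.2

noncomputable def PP (K : Type*) [Field K] (n : ℕ) (w : ℕ → ℕ) : Ideal (MvPolynomial (SSVar n) K) :=
  RingHom.ker (Phi K n w)

theorem PP_prime (w : ℕ → ℕ) : (PP K n w).IsPrime := RingHom.ker_isPrime _

theorem mem_PP [Infinite K] (w : ℕ → ℕ) (f : MvPolynomial (SSVar n) K) :
    f ∈ PP K n w ↔ ∀ β : Fin n → ℕ → K, Tri β →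
      MvPolynomial.eval (fun v => Am n w β v.1.1 v.1.2) f = 0 := by
  have key : ∀ x : Fin n × Fin n → K, MvPolynomial.eval x (Phi K n w f) =
      MvPolynomial.eval (fun v => Am n w (fun i a => MvPolynomial.eval x (bG K n i a)) v.1.1 v.1.2) f := by
    intro x
    have h1 : MvPolynomial.eval x (Phi K n w f) =
      ((MvPolynomial.eval x).comp (Phi K n w).toRingHom) f := rfl
    rw [h1]
    congr 1
    apply MvPolynomial.ringHom_ext
    · intro c; simp [Phi]
    · intro v
      simp only [Phi, RingHom.comp_apply, AlgHom.toRingHom_eq_coe, RingHom.coe_coe, MvPolynomial.aeval_X,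
        MvPolynomial.eval_X, Am, Matrix.of_apply, map_sum, map_mul]
      apply Finset.sum_congr rfl
      intro a _
      congr 1
      unfold sg; split_ifs <;> simp
  constructor
  · intro hf β hβ
    have h0 : Phi K n w f = 0 := hf
    have := key fun p => β p.1 p.2
    rw [h0, map_zero] at this
    rw [this]
    congr 2
    ext v
    congr 1
    ext i a
    unfold bG
    split_ifs with h
    · simp
    · rw [hβ i a (by omega)]; simp
  · intro hf
    show Phi K n w f = 0
    apply MvPolynomial.funext
    intro x
    rw [key, map_zero]
    apply hf
    intro i a h
    show MvPolynomial.eval x (bG K n i a) = 0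
    unfold bG
    rw [dif_neg (by omega)]; simp

end
end

section
section
variable {K : Type*} [Field K] {n : ℕ}

theorem degen {w : ℕ → ℕ} (h : Inv w) {q p s r : ℕ} (hq : w q = p) (hs : w s = r)
    (h1 : q < p) (h2 : q < s) (h3 : p < r) (β : Fin n → ℕ → K) (hβ : Tri β) (t : K) (ht : t ≠ 0) :
    ∃ c : Fin n → ℕ → K, Tri c ∧ ∀ i j, Am n w c i j =
      t ^ 2 * (β i q * β j p - β i p * β j q) + Am n (cj w p r) β i j := by
  obtain ⟨c1, c2, c3, c4, c5⟩ := cj_vals h hq hs h1 h2 h3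
  have hp : w p = q := by rw [← hq, h.inv]
  have hr : w r = s := by rw [← hs, h.inv]
  have hsp : s ≠ p := by rintro rfl; omega
  have hsr : s ≠ r := by rintro rfl; exact h.ne _ hs
  let ε : K := if s < r then 1 else -1
  let α : K := if s < p then 1 else -1
  have hε : ε * ε = 1 := by simp only [ε]; split_ifs <;> simp
  let c : Fin n → ℕ → K := fun i a =>
    if a = q then t * β i q + α * t⁻¹ * β i s else
    if a = p then t * β i p + t⁻¹ * β i r else
    if a = s then - ε * α * (t⁻¹ * t⁻¹) * β i s else β i a
  have eq : ∀ i, c i q = t * β i q + α * t⁻¹ * β i s := fun i => by simp [c]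
  have ep : ∀ i, c i p = t * β i p + t⁻¹ * β i r := fun i => by simp [c, h1.ne']
  have es : ∀ i, c i s = - ε * α * (t⁻¹ * t⁻¹) * β i s := fun i => by simp [c, h2.ne', hsp]
  have eo : ∀ i a, a ≠ q → a ≠ p → a ≠ s → c i a = β i a := fun i a h1 h2 h3 => by simp [c, h1, h2, h3]
  have hc : Tri c := by
    intro i a hia
    simp only [c]
    split_ifs with k1 k2 k3
    · rw [hβ i q (by omega), hβ i s (by omega)]; ring
    · rw [hβ i p (by omega), hβ i r (by omega)]; ring
    · rw [hβ i s (by omega)]; ring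
    · exact hβ i a hia
  refine ⟨c, hc, fun i j => ?_⟩
  have hN : n ≤ n + q + p + s + r + 1 := by omega
  rw [← Am_N _ w c hc hN, ← Am_N _ (cj w p r) β hβ hN, ← sub_eq_iff_eq_add]
  simp only [Am, Matrix.of_apply]
  rw [← Finset.sum_sub_distrib]
  have hsub : ({q, p, s, r} : Finset ℕ) ⊆ Finset.range (n + q + p + s + r + 1) := by
    intro a ha
    simp only [Finset.mem_insert, Finset.mem_singleton] at ha
    rw [Finset.mem_range]; omega
  rw [← Finset.sum_subset hsub]
  · rw [Finset.sum_insert (by simp only [Finset.mem_insert, Finset.mem_singleton]; omega),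
      Finset.sum_insert (by simp only [Finset.mem_insert, Finset.mem_singleton]; omega),
      Finset.sum_insert (by simp only [Finset.mem_singleton]; omega), Finset.sum_singleton]
    have s1 : sg K w q = 1 := by simp [sg, hq, h1]
    have s2 : sg K w p = -1 := by simp [sg, hp, h1.le]
    have s3 : sg K w s = ε := by simp [sg, hs, ε]
    have s4 : sg K w r = -ε := by
      simp only [sg, hr, ε]; split_ifs <;> first | omega | simp
    have s5 : sg K (cj w p r) q = 1 := by simp [sg, c1, h1.trans h3]
    have s6 : sg K (cj w p r) r = -1 := by simp [sg, c2, (h1.trans h3).le]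
    have s7 : sg K (cj w p r) s = α := by simp [sg, c4, α]
    have s8 : sg K (cj w p r) p = -α := by
      simp only [sg, c3, α]; split_ifs <;> first | omega | simp
    rw [hq, hp, hs, hr, c1, c2, c3, c4, s1, s2, s3, s4, s5, s6, s7, s8, eq, eq, ep, ep, es, es,
      eo i r (by omega) (by omega) (by omega), eo j r (by omega) (by omega) (by omega)]
    have htt : t * t⁻¹ = 1 := mul_inv_cancel₀ ht
    linear_combination (β i q * β j r - β i r * β j q + α * (β i s * β j p - β i p * β j s)) * htt +
      (-α * (t⁻¹ * t⁻¹) * (β i s * β j r - β i r * β j s)) * hε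
  · intro a _ ha
    simp only [Finset.mem_insert, Finset.mem_singleton, not_or] at ha
    obtain ⟨k1, k2, k3, k4⟩ := ha
    have e1 : w a ≠ q := by intro h'; apply k2; rw [← hq, ← h', h.inv]
    have e2 : w a ≠ p := by intro h'; apply k1; rw [← hp, ← h', h.inv]
    have e3 : w a ≠ s := by intro h'; apply k4; rw [← hs, ← h', h.inv]
    rw [eo i a k1 k2 k3, eo j _ e1 e2 e3, c5 a k1 k2 k3 k4]
    simp only [sg, c5 a k1 k2 k3 k4, sub_self]

theorem PP_mono [Infinite K] {w : ℕ → ℕ} (h : Inv w) {q p s r : ℕ} (hq : w q = p) (hs : w s = r)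
    (h1 : q < p) (h2 : q < s) (h3 : p < r) : PP K n w ≤ PP K n (cj w p r) := by
  intro f hf
  rw [mem_PP] at hf ⊢
  intro β hβ
  let g : Polynomial K := MvPolynomial.eval₂ Polynomial.C (fun v : SSVar n =>
    Polynomial.X ^ 2 * Polynomial.C (β v.1.1 q * β v.1.2 p - β v.1.1 p * β v.1.2 q) +
      Polynomial.C (Am n (cj w p r) β v.1.1 v.1.2)) f
  have hg : ∀ t, g.eval t = MvPolynomial.eval (fun v : SSVar n =>
      t ^ 2 * (β v.1.1 q * β v.1.2 p - β v.1.1 p * β v.1.2 q) + Am n (cj w p r) β v.1.1 v.1.2) f := by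
    intro t
    have := MvPolynomial.eval₂_comp_left (Polynomial.evalRingHom t) Polynomial.C (fun v : SSVar n =>
      Polynomial.X ^ 2 * Polynomial.C (β v.1.1 q * β v.1.2 p - β v.1.1 p * β v.1.2 q) +
      Polynomial.C (Am n (cj w p r) β v.1.1 v.1.2)) f
    rw [Polynomial.coe_evalRingHom] at this
    rw [this, MvPolynomial.eval, MvPolynomial.coe_eval₂Hom]
    congr 1
    · ext x; simp
    · ext v; simp
  have h0 : ∀ t, t ≠ 0 → g.eval t = 0 := by
    intro t ht
    obtain ⟨c, hc, hcA⟩ := degen h hq hs h1 h2 h3 β hβ t ht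
    rw [hg, ← hf c hc]
    congr 2
    ext v
    rw [hcA]
  have hg0 : g = 0 := by
    apply Polynomial.eq_zero_of_infinite_isRoot
    apply Set.Infinite.mono (s := {0}ᶜ) (fun t ht => h0 t ht)
    exact (Set.finite_singleton 0).infinite_compl
  have := hg 0
  rw [hg0] at this
  simp only [Polynomial.eval_zero] at this
  rw [this]
  congr 2
  ext v; ring

theorem IR_le_PP [Infinite K] {w : ℕ → ℕ} (h : Inv w) : IR K n (rk w) ≤ PP K n w := by
  unfold IR
  rw [Ideal.span_le]
  rintro f ⟨R, -, -, ⟨i, j, hj1, hji, hi, hR, hlt⟩, rfl⟩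
  show _ ∈ PP K n w
  rw [mem_PP]
  intro β hβ
  exact eval_pf_zero (Am n w β) ⟨Am_diag h β hβ, Am_skew h β hβ⟩ i j (rk w i j) hi (hji.trans hi)
    (Am_rank w β hβ i j hi _) R hR hlt

theorem X_mem_PP [Infinite K] {w : ℕ → ℕ} (h : Inv w) {q p s r : ℕ} (hq : w q = p) (hs : w s = r)
    (h1 : q < p) (h2 : q < s) (h3 : p < r) (hp : p < n) (hmin : ∀ a, a < q → n ≤ w a) (v : SSVar n)
    (hv1 : (v.1.1 : ℕ) = p) (hv2 : (v.1.2 : ℕ) = q) : MvPolynomial.X v ∈ PP K n (cj w p r) := by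
  obtain ⟨c1, c2, c3, c4, c5⟩ := cj_vals h hq hs h1 h2 h3
  rw [mem_PP]
  intro β hβ
  rw [MvPolynomial.eval_X, Am_skew (h.cj p r) β hβ,
    Am_filter _ β hβ _ _ (q+1) (p+1) (by omega) (by omega) (by omega), Finset.sum_eq_zero, neg_zero]
  intro a ha
  exfalso
  rw [Finset.mem_filter, Finset.mem_range] at ha
  rcases lt_or_eq_of_le (Nat.lt_succ_iff.1 ha.1) with h' | rfl
  · by_cases har : a = r
    · omega
    · have := hmin a h'
      rw [c5 a (by omega) (by omega) (by omega) har] at ha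
      omega
  · omega

theorem X_notMem_PP [Infinite K] {w : ℕ → ℕ} (h : Inv w) {q p : ℕ} (hq : w q = p) (v : SSVar n)
    (hv1 : (v.1.1 : ℕ) = p) (hv2 : (v.1.2 : ℕ) = q) : MvPolynomial.X v ∉ PP K n w := by
  intro hX
  rw [mem_PP] at hX
  have := hX (fun i a => if (i : ℕ) = a then 1 else 0) (fun i a hia => if_neg (by omega))
  rw [MvPolynomial.eval_X] at this
  have hp : w p = q := by rw [← hq, h.inv]
  simp only [Am, Matrix.of_apply] at this
  rw [Finset.sum_eq_single p] at this
  · rw [hv1, hv2, hp] at this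
    simp only [if_true, mul_one, sg] at this
    split_ifs at this <;> simp at this
  · intro b _ hb
    rw [if_neg (by omega)]; ring
  · intro hb
    exact absurd (Finset.mem_range.2 (hv1 ▸ v.1.1.2)) hb

end
end

section
section
variable {K : Type*} [Field K] {n : ℕ}

theorem SM.bd {m : SSVar n →₀ ℕ} {a b : ℕ} (h : SM m a b) : a < n ∧ b < n := by
  obtain ⟨v, -, h'⟩ := h
  have := v.1.1.2
  have := v.1.2.2
  omega

theorem Std_sub {S S' : ℕ → ℕ → Prop} {r : ℕ → ℕ → ℕ} (h : Std n S r) (hs : ∀ a b, S' a b → S a b) :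
    Std n S' r := by
  intro i j hi hj T hT hTS
  exact h i j hi hj T hT fun e he => ⟨hs _ _ (hTS e he).1, (hTS e he).2⟩

theorem A_base [Infinite K] {w : ℕ → ℕ} (hno : ∀ q, q < n → n ≤ w q)
    (f : MvPolynomial (SSVar n) K) (hf : f ∈ PP K n w) (hst : StdP (rk w) f) : f = 0 := by
  have hc : ∀ d, f.coeff d ≠ 0 → d = 0 := by
    intro d hd
    by_contra hd0
    obtain ⟨v, hv⟩ := Finsupp.ne_iff.1 hd0
    have h1 := hst d hd (v.1.1 + 1) (v.1.2 + 1) v.1.1.2 v.1.2.2 {((v.1.1 : ℕ), (v.1.2 : ℕ))} (by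
      intro e he e' he' hne
      rw [Finset.mem_singleton] at he he'
      exact absurd (he.trans he'.symm) hne) (by
      intro e he
      rw [Finset.mem_singleton] at he
      subst he
      exact ⟨⟨v, hv, Or.inl ⟨rfl, rfl⟩⟩, Nat.lt_succ_self _, Nat.lt_succ_self _⟩)
    rw [Finset.card_singleton, rk, Finset.card_eq_zero.2] at h1
    · omega
    · rw [Finset.filter_eq_empty_iff]
      intro a ha
      rw [Finset.mem_range] at ha
      have := v.1.1.2
      have := v.1.2.2
      have := hno a (by omega)
      omega
  have hfC : f = MvPolynomial.C (f.coeff 0) := by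
    ext d
    rw [MvPolynomial.coeff_C]
    split_ifs with h
    · rw [h]
    · by_contra h'
      exact h (hc d h').symm
  rw [mem_PP] at hf
  have := hf (fun _ _ => 0) (fun _ _ _ => rfl)
  rw [hfC, MvPolynomial.eval_C] at this
  rw [hfC, this, map_zero]

theorem A_main [Infinite K] (M : ℕ) : ∀ w : ℕ → ℕ, Inv w →
    (∑ i ∈ Finset.range (n+1), ∑ j ∈ Finset.range (n+1), rk w i j) = M →
    ∀ f : MvPolynomial (SSVar n) K, f ∈ PP K n w → StdP (rk w) f → f = 0 := by
  classical
  induction M using Nat.strong_induction_on with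
  | _ M IH =>
  intro w h hM
  by_cases hex : ∃ q, q < n ∧ w q < n
  swap
  · push Not at hex
    exact fun f => A_base hex f
  obtain ⟨hqn, hpn⟩ := Nat.find_spec hex
  have hmin' : ∀ a, a < Nat.find hex → n ≤ w a := by
    intro a ha
    have := Nat.find_min hex ha
    omega
  generalize Nat.find hex = q at hqn hpn hmin'
  obtain ⟨p, hq⟩ : ∃ p, w q = p := ⟨_, rfl⟩
  rw [hq] at hpn
  have hp : w p = q := by rw [← hq, h.inv]
  have h1 : q < p := by
    have h0 : p ≠ q := by rw [← hq]; exact h.ne q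
    by_contra h'
    have := hmin' p (by omega)
    omega
  let v : SSVar n := ⟨(⟨p, hpn⟩, ⟨q, hqn⟩), h1⟩
  intro f
  induction hD : f.totalDegree using Nat.strong_induction_on generalizing f with
  | _ D IHD =>
  intro hf hst
  by_contra hf0
  set g := f.modMonomial (Finsupp.single v 1) with hg
  set f' := f.divMonomial (Finsupp.single v 1) with hf'
  have hdec : MvPolynomial.X v * f' + g = f := MvPolynomial.divMonomial_add_modMonomial_single f v
  have hgc : ∀ d, g.coeff d ≠ 0 → f.coeff d ≠ 0 ∧ d v = 0 := by
    intro d hd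
    by_cases hle : Finsupp.single v 1 ≤ d
    · rw [hg, MvPolynomial.coeff_modMonomial_of_le _ hle] at hd
      exact absurd rfl hd
    · rw [hg, MvPolynomial.coeff_modMonomial_of_not_le _ hle] at hd
      refine ⟨hd, ?_⟩
      rw [Finsupp.single_le_iff] at hle
      omega
  have hg0 : g = 0 := by
    by_contra hg0
    obtain ⟨m, hm, hmax⟩ := Finset.exists_max_image g.support wt (MvPolynomial.support_nonempty.2 hg0)
    rw [MvPolynomial.mem_support_iff] at hm
    obtain ⟨hfm, hmv⟩ := hgc m hm
    obtain ⟨s, r, h2, h3, hs, hstd⟩ := CL h (SM m) (fun a b => SM.symm) (fun a ha => ha.ne rfl)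
      (fun a b => SM.bd) (hst m hfm) hq hqn hpn hmin' (by
        rintro ⟨u, hu, h'⟩
        apply hu
        have : u = v := by
          apply Subtype.ext
          apply Prod.ext <;> apply Fin.ext
          · have := u.2
            rw [Fin.lt_def] at this
            show (u.1.1 : ℕ) = p
            omega
          · have := u.2
            rw [Fin.lt_def] at this
            show (u.1.2 : ℕ) = q
            omega
        rw [this]; exact hmv)
    have hX : MvPolynomial.X v ∈ PP K n (cj w p r) := X_mem_PP h hq hs h1 h2 h3 hpn hmin' v rfl rfl
    have hgP : g ∈ PP K n (cj w p r) := by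
      have e : g = f - MvPolynomial.X v * f' := by rw [← hdec]; ring
      rw [e]
      exact Ideal.sub_mem _ (PP_mono h hq hs h1 h2 h3 hf) (Ideal.mul_mem_right _ _ hX)
    obtain ⟨k, hk1, hk2, hk3⟩ := red_keep (rk (cj w p r)) (rk_symm (h.cj p r)) g m hm
      (fun d hd => hmax d (MvPolynomial.mem_support_iff.2 hd)) hstd
    have hkP : k ∈ PP K n (cj w p r) := by
      have e : k = g - (g - k) := by ring
      rw [e]
      exact Ideal.sub_mem _ hgP (IR_le_PP (h.cj p r) hk3)
    have hlt : (∑ i ∈ Finset.range (n+1), ∑ j ∈ Finset.range (n+1), rk (cj w p r) i j) < M := by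
      rw [← hM]
      have hle : ∀ i j, rk (cj w p r) i j ≤ rk w i j := by
        intro i j
        rw [rk_diff h hq hs h1 h2 h3 i j]; omega
      apply Finset.sum_lt_sum
      · intro i _
        exact Finset.sum_le_sum fun j _ => hle i j
      · refine ⟨q + 1, Finset.mem_range.2 (by omega), ?_⟩
        apply Finset.sum_lt_sum
        · intro j _; exact hle _ j
        · refine ⟨p + 1, Finset.mem_range.2 (by omega), ?_⟩
          rw [rk_diff h hq hs h1 h2 h3 (q+1) (p+1)]
          rw [if_pos (by omega)]
          omega
    have := IH _ hlt _ (h.cj p r) rfl k hkP hk1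
    rw [this] at hk2
    simp at hk2
  rw [hg0, add_zero] at hdec
  have hf'0 : f' ≠ 0 := by
    intro h'; rw [h', mul_zero] at hdec; exact hf0 hdec.symm
  apply hf'0
  refine IHD f'.totalDegree ?_ f' rfl ?_ ?_
  · rw [← hD, ← hdec, MvPolynomial.totalDegree_mul_of_isDomain (MvPolynomial.X_ne_zero v) hf'0,
      MvPolynomial.totalDegree_X]
    omega
  · rw [← hdec] at hf
    exact ((PP_prime w).mem_or_mem hf).resolve_left (X_notMem_PP h hq v rfl rfl)
  · intro d hd
    rw [hf', MvPolynomial.coeff_divMonomial] at hd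
    refine Std_sub (hst _ hd) ?_
    rintro a b ⟨u, hu, h'⟩
    refine ⟨u, ?_, h'⟩
    rw [Finsupp.add_apply]
    omega

theorem PP_eq_IR [Infinite K] {w : ℕ → ℕ} (h : Inv w) : PP K n w = IR K n (rk w) := by
  apply le_antisymm _ (IR_le_PP h)
  intro g hg
  obtain ⟨k, hk1, hk2⟩ := red_all (rk w) (rk_symm h) g
  have hkP : k ∈ PP K n w := by
    have e : k = g - (g - k) := by ring
    rw [e]
    exact Ideal.sub_mem _ hg (IR_le_PP h hk2)
  have := A_main _ w h rfl k hkP hk1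
  rwa [this, sub_zero] at hk2

theorem final (K : Type*) [Field K] [IsAlgClosed K] (n : ℕ)
    (z : Equiv.Perm ℕ) (hz : z ∈ FPFIn n) :
    IssIdeal K n z = IXss K n z ∧ (IssIdeal K n z).IsPrime := by
  have : Infinite K := inferInstance
  obtain ⟨hz0, hzne, hzz, -⟩ := hz.1
  have hinv : ∀ a, z (z a) = a := fun a => by
    rw [← Equiv.Perm.mul_apply, hzz]; rfl
  have hpos : ∀ a, 1 ≤ z (a + 1) := by
    intro a
    by_contra h'
    have h0 : z (a + 1) = 0 := by omega
    have := hinv (a + 1)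
    rw [h0, hz0] at this
    omega
  let w : ℕ → ℕ := fun a => z (a + 1) - 1
  have hw1 : ∀ a, w a + 1 = z (a + 1) := fun a => Nat.sub_add_cancel (hpos a)
  have h : Inv w := by
    constructor
    · intro a
      show z (w a + 1) - 1 = a
      rw [hw1, hinv]; rfl
    · intro a ha
      apply hzne (a + 1) (by omega)
      rw [← hw1, ha]
  have hrk : rnk z = rk w := by
    funext i j
    unfold rnk rk
    symm
    apply Finset.card_nbij' (fun a => a + 1) (fun a => a - 1)
    · intro a ha
      have := hw1 a
      simp only [Finset.coe_filter, Set.mem_ofPred_eq, Finset.mem_range, Finset.mem_Icc] at ha ⊢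
      omega
    · intro a ha
      simp only [Finset.coe_filter, Set.mem_ofPred_eq, Finset.mem_range, Finset.mem_Icc] at ha ⊢
      have := hw1 (a - 1)
      rw [show a - 1 + 1 = a by omega] at this
      omega
    · intro a _; exact Nat.add_sub_cancel ..
    · intro a ha
      simp only [Finset.coe_filter, Set.mem_ofPred_eq, Finset.mem_Icc] at ha
      exact Nat.sub_add_cancel (by omega)
  have hI : IssIdeal K n z = PP K n w := by rw [IssIdeal_eq_IR, hrk, PP_eq_IR h]
  refine ⟨?_, by rw [hI]; exact PP_prime w⟩
  apply le_antisymm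
  · rw [IssIdeal_eq_IR]
    unfold IR
    rw [Ideal.span_le]
    rintro f ⟨R, -, -, ⟨i, j, hj1, hji, hi, hR, hlt⟩, rfl⟩
    show _ ∈ IXss K n z
    intro A hA
    exact eval_pf_zero A ⟨hA.1.2, fun i j => by
        have := congrFun (congrFun hA.1.1 j) i
        simpa using this⟩ i j _ hi (hji.trans hi)
      (hA.2 i j hi (hji.trans hi) (hj1.trans hji) hj1) R hR hlt
  · rw [hI]
    intro f hf
    rw [mem_PP]
    intro β hβ
    apply hf
    refine ⟨⟨?_, Am_diag h β hβ⟩, ?_⟩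
    · ext i j
      rw [Matrix.transpose_apply, Matrix.neg_apply]
      exact Am_skew h β hβ j i
    · intro i j hi hj _ _
      rw [hrk]
      exact Am_rank w β hβ i j hi hj
end
end

/-- For `z ∈ FPF_n(I_n)`, the Pfaffian ideal `I^ss_z` equals the
vanishing ideal `I(X^ss_z)`; in particular `I^ss_z` is prime. -/
theorem statement5 (K : Type*) [Field K] [IsAlgClosed K] (n : ℕ) (hn : 1 ≤ n)
    (z : Equiv.Perm ℕ) (hz : z ∈ FPFIn n) :
    IssIdeal K n z = IXss K n z ∧ (IssIdeal K n z).IsPrime := by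
  exact final K n z hz

end Paper
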